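/- Let R be a commutative ring. The assignment √I ↦ Loc(R/I), for I ranging over finitely generated ideals of R, is a well-defined, inclusion-reversing bijection from the Zariski lattice of R (the lattice of radicals of finitely generated ideals of R, ordered by inclusion) onto the poset of localizing subcategories of D(R) generated by a single compact object; in particular the latter poset is a distributive lattice isomorphic to the opposite of the Zariski lattice. -/

import Mathlib

open CategoryTheory CategoryTheory.Limits CategoryTheory.Pretriangulated ZeroObject

universe w w' v u

section TriangulatedDefs

variable {T : Type u} [Category.{v} T] [Preadditive T] [HasZeroObject T]
  [HasShift T ℤ] [∀ n : ℤ, (shiftFunctor T n).Additive] [Pretriangulated T]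

/-- A localizing subcategory of a (pre)triangulated category, encoded as a set of
objects: it is closed under isomorphisms, contains the zero object, is stable
under shifts, closed under cones of distinguished triangles (hence a full
triangulated subcategory), and closed under arbitrary small coproducts
(phrased via colimit cofans, so that no global existence of coproducts
is needed). -/
structure IsLocalizingSub (S : Set T) : Prop where
  zero_mem : (0 : T) ∈ S
  mem_of_iso : ∀ {x y : T}, (x ≅ y) → x ∈ S → y ∈ S
  shift_mem : ∀ (n : ℤ) {x : T}, x ∈ S → x⟦n⟧ ∈ S
  cone_mem : ∀ (Tr : Triangle T), Tr ∈ distinguishedTriangles →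
    Tr.obj₁ ∈ S → Tr.obj₂ ∈ S → Tr.obj₃ ∈ S
  coprod_mem : ∀ {ι : Type w} (f : ι → T) (c : Cofan f), IsColimit c →
    (∀ i, f i ∈ S) → c.pt ∈ S

/-- A colocalizing subcategory: as `IsLocalizingSub` but with products instead
of coproducts. -/
structure IsColocalizingSub (S : Set T) : Prop where
  zero_mem : (0 : T) ∈ S
  mem_of_iso : ∀ {x y : T}, (x ≅ y) → x ∈ S → y ∈ S
  shift_mem : ∀ (n : ℤ) {x : T}, x ∈ S → x⟦n⟧ ∈ S
  cone_mem : ∀ (Tr : Triangle T), Tr ∈ distinguishedTriangles →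
    Tr.obj₁ ∈ S → Tr.obj₂ ∈ S → Tr.obj₃ ∈ S
  prod_mem : ∀ {ι : Type w} (f : ι → T) (c : Fan f), IsLimit c →
    (∀ i, f i ∈ S) → c.pt ∈ S

/-- `Loc S`: the smallest localizing subcategory containing the set of
objects `S` (the intersection of all localizing subcategories containing it). -/
def Loc (S : Set T) : Set T :=
  ⋂₀ {L : Set T | IsLocalizingSub.{w} L ∧ S ⊆ L}

/-- The right orthogonal of a set of objects. -/
def rightOrth (C : Set T) : Set T :=
  {x : T | ∀ ⦃c : T⦄, c ∈ C → ∀ (g : c ⟶ x), g = 0}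

end TriangulatedDefs

section CompactDefs

variable {T : Type u} [Category.{v} T] [Preadditive T]

/-- The canonical comparison map `⨁ᵢ Hom(x, fᵢ) →+ Hom(x, ∐ f)` associated to a
cofan `c` on a family `f`. -/
noncomputable def cofanHomComparison {ι : Type w} (x : T) (f : ι → T) (c : Cofan f) :
    (Π₀ i, (x ⟶ f i)) →+ (x ⟶ c.pt) :=
  letI := Classical.decEq ι
  DFinsupp.sumAddHom (fun i => AddMonoidHom.mk' (fun φ => φ ≫ c.inj i)
    (fun φ ψ => Preadditive.add_comp _ _ _ φ ψ (c.inj i)))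

/-- An object `x` is compact if `Hom(x, -)` commutes with arbitrary small
coproducts, i.e. for every colimit cofan on a family `f`, the canonical map
`⨁ᵢ Hom(x, fᵢ) → Hom(x, ∐ f)` is bijective. -/
def IsCompactObj (x : T) : Prop :=
  ∀ ⦃ι : Type w⦄ (f : ι → T) (c : Cofan f), IsColimit c →
    Function.Bijective (cofanHomComparison x f c)

end CompactDefs

section DR

variable (R : Type u) [CommRing R] [HasDerivedCategory.{w'} (ModuleCat.{u} R)]

/-- The `R`-module `M`, regarded as an object of the derived category `D(R)`,
as a complex concentrated in degree `0`. -/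
noncomputable def smod (M : ModuleCat.{u} R) : DerivedCategory (ModuleCat.{u} R) :=
  (DerivedCategory.singleFunctor (ModuleCat.{u} R) 0).obj M

end DR
section Statement2

variable (R : Type u) [CommRing R] [HasDerivedCategory.{w'} (ModuleCat.{u} R)]

/-- The localizing subcategory of `D(R)` generated by `R/I`. -/
noncomputable def locQuot (I : Ideal R) : Set (DerivedCategory (ModuleCat.{u} R)) :=
  Loc.{u} {smod R (ModuleCat.of R (R ⧸ I))}

end Statement2

/-!
For a finitely generated ideal `I`, iterated cones on multiplication by its generators, starting
from `R`, give a compact object of `Loc(R/I)` that generates every complex on which each `f ∈ I` is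
nilpotent, in particular `R/I`. Conversely, if `R/J ∈ Loc(R/I)` and `f ∈ I`, then `R/J` has no
nonzero map to `(R/J)_f`, since `f` acts invertibly on the latter and by zero on `R/I`; so `f ∈ √J`.

It remains to see that every compact object `C` generates some `Loc(R/I)`. In a tower of cell
attachments killing all maps from shifts of `R`, the map out of `C` vanishes at a finite stage, so
`C` is a retract of a strictly perfect complex, given by an idempotent `e`, and the cone `K` of
`1 - e` generates the same localizing subcategory as `C`.

Call an ideal good if it contains a finitely generated `I` with `R/I ∈ Loc(K)`. Good ideals form an
Oka family, so if the annihilator of `K` in `D(R)` were not good, an ideal `p` containing it and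
maximal among the ideals that are not good would be prime. If `K ⊗ κ(p)` is acyclic, a lifted
contraction is a homotopy from zero to an endomorphism of `K` congruent to some `t ∉ p` modulo `p`,
and the Cayley-Hamilton theorem gives `r ∉ p` annihilating `K`. Otherwise a nonzero class in the
cohomology of `K ⊗ κ(p)` lifts to maps `M ⟶ K ⊗ M ⟶ M`, up to a shift, with composite some `s ∉ p`,
for all modules `M` killed by a suitable finitely generated ideal contained in `p`. As `p + (s)` is
good, that ideal can be enlarged so that `s` is invertible on `M` modulo `Loc(K)`; then
`M ∈ Loc(K)`, and `p` is good. Both cases are absurd, so the annihilator of `K` contains a finitely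
generated `I` with `R/I ∈ Loc(K)`, whence `Loc(K) = Loc(R/I)`.
-/

section LocalizingSub

variable {T : Type u} [Category.{v} T] [Preadditive T] [HasZeroObject T]
  [HasShift T ℤ] [∀ n : ℤ, (shiftFunctor T n).Additive] [Pretriangulated T]

theorem isLocalizingSub_loc (S : Set T) : IsLocalizingSub.{w} (Loc.{w} S) where
  zero_mem := fun _ hL => hL.1.zero_mem
  mem_of_iso := fun e hx L hL => hL.1.mem_of_iso e (hx L hL)
  shift_mem := fun n _ hx L hL => hL.1.shift_mem n (hx L hL)
  cone_mem := fun Tr h h₁ h₂ L hL => hL.1.cone_mem Tr h (h₁ L hL) (h₂ L hL)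
  coprod_mem := fun f c hc h _ hL => hL.1.coprod_mem f c hc fun i => h i _ hL

theorem mem_loc_self (C : T) : C ∈ Loc.{w} {C} := fun _ hL => hL.2 rfl

theorem loc_singleton_subset_iff {C : T} {L : Set T} (hL : IsLocalizingSub.{w} L) :
    Loc.{w} {C} ⊆ L ↔ C ∈ L :=
  ⟨fun h => h (mem_loc_self C), fun h _ hx => hx L ⟨hL, by simpa using h⟩⟩

theorem loc_singleton_eq_of_iso {X Y : T} (e : X ≅ Y) : Loc.{w} {X} = Loc.{w} {Y} :=
  Set.Subset.antisymm
    ((loc_singleton_subset_iff (isLocalizingSub_loc _)).2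
      ((isLocalizingSub_loc _).mem_of_iso e.symm (mem_loc_self Y)))
    ((loc_singleton_subset_iff (isLocalizingSub_loc _)).2
      ((isLocalizingSub_loc _).mem_of_iso e (mem_loc_self X)))

/-- The Verdier quotient functor `T ⥤ T / L` by a class of objects `L`: the localization at the
morphisms with cone in `L`. -/
abbrev verdierQ (L : Set T) : T ⥤ (ObjectProperty.trW (· ∈ L)).Localization :=
  (ObjectProperty.trW (· ∈ L)).Q

namespace IsLocalizingSub

variable {L : Set T} (hL : IsLocalizingSub.{w} L)

include hL

theorem isClosedUnderIsomorphisms :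
    ObjectProperty.IsClosedUnderIsomorphisms (C := T) (· ∈ L) :=
  ⟨fun e h => hL.mem_of_iso e h⟩

theorem isTriangulated : ObjectProperty.IsTriangulated (C := T) (· ∈ L) :=
  have := hL.isClosedUnderIsomorphisms
  have : ObjectProperty.IsStableUnderShift (C := T) (· ∈ L) ℤ :=
    ⟨fun n => ⟨fun _ h => hL.shift_mem n h⟩⟩
  have : ObjectProperty.IsTriangulatedClosed₃ (C := T) (· ∈ L) := .mk' fun Tr h h₁ h₂ =>
    hL.cone_mem Tr h h₁ h₂
  { exists_zero := ⟨0, isZero_zero T, hL.zero_mem⟩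
    toIsTriangulatedClosed₂ := .of_isTriangulatedClosed₃ }

theorem mem_of_isZero {X : T} (h : IsZero X) : X ∈ L :=
  hL.mem_of_iso ((isZero_zero T).iso h) hL.zero_mem

theorem trW_iff_obj₃_mem {Tr : Triangle T} (h : Tr ∈ distinguishedTriangles) :
    ObjectProperty.trW (· ∈ L) Tr.mor₁ ↔ Tr.obj₃ ∈ L :=
  have := hL.isClosedUnderIsomorphisms
  ObjectProperty.trW_iff_of_distinguished (· ∈ L) Tr h

end IsLocalizingSub

end LocalizingSub

section Coproducts

variable {T : Type u} [Category.{v} T] [HasShift T ℤ]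

theorem nonempty_isColimit_shift {J : Type*} {f : J → T} {X : T} {i : ∀ j, f j ⟶ X}
    (hX : IsColimit (Cofan.mk X i)) (n : ℤ) :
    Nonempty (IsColimit (Cofan.mk (X⟦n⟧) fun j => (i j)⟦n⟧')) :=
  ⟨isColimitCofanMkObjOfIsColimit (shiftFunctor T n) f i hX⟩

variable [Preadditive T] [HasZeroObject T] [∀ n : ℤ, (shiftFunctor T n).Additive]
  [Pretriangulated T]

section

variable {J : Type*} {S : J → Triangle T} (hS : ∀ j, S j ∈ distinguishedTriangles)
  {Tr : Triangle T} (hTr : Tr ∈ distinguishedTriangles) (φ : ∀ j, S j ⟶ Tr)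
  (h₁ : IsColimit (Cofan.mk Tr.obj₁ fun j => (φ j).hom₁))
  (h₂ : IsColimit (Cofan.mk Tr.obj₂ fun j => (φ j).hom₂))

include hS hTr h₁ h₂

theorem eq_zero_of_hom₃_comp_eq_zero {A : T} (a : Tr.obj₃ ⟶ A)
    (ha : ∀ j, (φ j).hom₃ ≫ a = 0) : a = 0 := by
  obtain ⟨h₁'⟩ := nonempty_isColimit_shift h₁ 1
  obtain ⟨h₂'⟩ := nonempty_isColimit_shift h₂ 1
  obtain ⟨b, rfl⟩ := Triangle.yoneda_exact₃ Tr hTr a <| Cofan.IsColimit.hom_ext h₂ _ _ fun j => by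
    simp [← (φ j).comm₂_assoc, ha]
  have hb (j : J) : ∃ c : (S j).obj₂⟦(1 : ℤ)⟧ ⟶ A,
      (φ j).hom₁⟦(1 : ℤ)⟧' ≫ b = (S j).mor₁⟦(1 : ℤ)⟧' ≫ c := by
    obtain ⟨c, hc⟩ := Triangle.yoneda_exact₃ _ (rot_of_distTriang _ (hS j))
      ((φ j).hom₁⟦(1 : ℤ)⟧' ≫ b) (((φ j).comm₃_assoc b).trans (ha j))
    exact ⟨-c, hc.trans ((Preadditive.neg_comp _ _).trans (Preadditive.comp_neg _ _).symm)⟩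
  choose c hc using hb
  have hbc : b = Tr.mor₁⟦(1 : ℤ)⟧' ≫ Cofan.IsColimit.desc h₂' c :=
    Cofan.IsColimit.hom_ext h₁' _ _ fun j => by
      have hj := Cofan.IsColimit.fac h₂' c j
      dsimp at hj ⊢
      rw [hc, ← Functor.map_comp_assoc, ← (φ j).comm₁, Functor.map_comp_assoc, hj]
  rw [hbc, comp_distTriang_mor_zero₃₁_assoc _ hTr, zero_comp]

theorem exists_forall_hom₃_comp_eq {A : T} (a : ∀ j, (S j).obj₃ ⟶ A) :
    ∃ d : Tr.obj₃ ⟶ A, ∀ j, (φ j).hom₃ ≫ d = a j := by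
  obtain ⟨h₁'⟩ := nonempty_isColimit_shift h₁ 1
  obtain ⟨d, hd⟩ := Triangle.yoneda_exact₂ Tr hTr
      (Cofan.IsColimit.desc h₂ fun j => (S j).mor₂ ≫ a j) <|
    Cofan.IsColimit.hom_ext h₁ _ _ fun j => by
      have hj := Cofan.IsColimit.fac h₂ (fun j => (S j).mor₂ ≫ a j) j
      dsimp at hj ⊢
      rw [← (φ j).comm₁_assoc, hj, comp_distTriang_mor_zero₁₂_assoc _ (hS j), zero_comp, comp_zero]
  have hb (j : J) : ∃ b : (S j).obj₁⟦(1 : ℤ)⟧ ⟶ A, a j - (φ j).hom₃ ≫ d = (S j).mor₃ ≫ b :=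
    Triangle.yoneda_exact₃ _ (hS j) _ <| by
      have hj := Cofan.IsColimit.fac h₂ (fun j => (S j).mor₂ ≫ a j) j
      dsimp at hj
      rw [Preadditive.comp_sub, (φ j).comm₂_assoc, ← hd, hj, sub_self]
  choose b hb using hb
  refine ⟨d + Tr.mor₃ ≫ Cofan.IsColimit.desc h₁' b, fun j => ?_⟩
  have hj := Cofan.IsColimit.fac h₁' b j
  dsimp at hj
  rw [Preadditive.comp_add, ← (φ j).comm₃_assoc, hj, ← hb, add_sub_cancel]

theorem nonempty_isColimit_cofan_hom₃ :
    Nonempty (IsColimit (Cofan.mk Tr.obj₃ fun j => (φ j).hom₃)) := by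
  choose d hd using fun s : Cofan fun j => (S j).obj₃ =>
    exists_forall_hom₃_comp_eq hS hTr φ h₁ h₂ s.inj
  refine ⟨Cofan.IsColimit.mk _ d hd fun s m hm => ?_⟩
  rw [← sub_eq_zero]
  refine eq_zero_of_hom₃_comp_eq_zero hS hTr φ h₁ h₂ _ fun j => ?_
  rw [Preadditive.comp_sub, hd, sub_eq_zero]
  exact hm j

end

theorem IsLocalizingSub.trW_of_isColimit {L : Set T} (hL : IsLocalizingSub.{w} L) {J : Type w}
    {X Y : J → T} {c : Cofan X} {c' : Cofan Y} (hc : IsColimit c) (hc' : IsColimit c')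
    {f : ∀ j, X j ⟶ Y j} {g : c.pt ⟶ c'.pt} (hg : ∀ j, c.inj j ≫ g = f j ≫ c'.inj j)
    (hf : ∀ j, ObjectProperty.trW (· ∈ L) (f j)) : ObjectProperty.trW (· ∈ L) g := by
  choose Z p q hS hZ using hf
  obtain ⟨Z', p', q', hTr⟩ := distinguished_cocone_triangle g
  obtain ⟨h₃⟩ := nonempty_isColimit_cofan_hom₃ hS hTr
    (fun j => completeDistinguishedTriangleMorphism _ _ (hS j) hTr (c.inj j) (c'.inj j) (hg j).symm)
    (hc.ofIsoColimit (Cofan.ext (Iso.refl _) fun _ => Category.comp_id _))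
    (hc'.ofIsoColimit (Cofan.ext (Iso.refl _) fun _ => Category.comp_id _))
  exact ⟨Z', p', q', hTr, hL.coprod_mem _ _ h₃ hZ⟩

end Coproducts

section Telescope

variable {T : Type u} [Category.{v} T] [HasCoproducts.{w} T]

/-- The countable coproduct `∐ₙ Y n`, indexed by a lift of `ℕ` to the universe in which `T` has
coproducts. -/
noncomputable abbrev seqSigma (Y : ℕ → T) : T :=
  ∐ fun n : ULift.{w} ℕ => Y n.down

namespace seqSigma

variable {Y : ℕ → T}

/-- The inclusion of the `n`-th summand into `seqSigma Y`. -/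
noncomputable abbrev ι (Y : ℕ → T) (n : ℕ) : Y n ⟶ seqSigma.{w} Y :=
  Sigma.ι (fun n : ULift.{w} ℕ => Y n.down) ⟨n⟩

/-- The morphism out of `seqSigma Y` with given components. -/
noncomputable abbrev desc {A : T} (f : ∀ n, Y n ⟶ A) : seqSigma.{w} Y ⟶ A :=
  Sigma.desc fun n : ULift.{w} ℕ => f n.down

theorem hom_ext {A : T} {f g : seqSigma.{w} Y ⟶ A} (h : ∀ n, ι Y n ≫ f = ι Y n ≫ g) : f = g :=
  Sigma.hom_ext _ _ fun n => h n.down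

end seqSigma

/-- The endomorphism of `∐ₙ Y n` induced by the transition maps of a sequence. The cone of
`𝟙 - seqShift a` is the homotopy colimit of the sequence. -/
noncomputable abbrev seqShift {Y : ℕ → T} (a : ∀ n, Y n ⟶ Y (n + 1)) :
    seqSigma.{w} Y ⟶ seqSigma.{w} Y :=
  seqSigma.desc fun n => a n ≫ seqSigma.ι Y (n + 1)

/-- A retract `A` of `Z` is the homotopy colimit of the idempotent `Z ⟶ A ⟶ Z`, through a split
sequence. -/
noncomputable def retractSplitting [Preadditive T] {A Z : T} (h : Retract A Z) :
    (ShortComplex.mk (𝟙 (seqSigma.{w} fun _ => Z) - seqShift.{w} fun _ => h.r ≫ h.i)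
      (seqSigma.desc fun _ => h.r)
      (seqSigma.hom_ext (Y := fun _ => Z) fun n => by
        simp [Preadditive.comp_sub, Preadditive.sub_comp])).Splitting where
  r := seqSigma.desc fun n => (𝟙 Z - h.r ≫ h.i) ≫ seqSigma.ι (fun _ => Z) n -
    h.r ≫ h.i ≫ ∑ k ∈ Finset.range n, seqSigma.ι (fun _ => Z) k
  s := h.i ≫ seqSigma.ι (fun _ => Z) 0
  f_r := seqSigma.hom_ext (Y := fun _ => Z) fun n => by
    simp [Preadditive.comp_sub, Preadditive.sub_comp, Preadditive.comp_add,
      Finset.sum_range_succ]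
    abel
  s_g := by simp
  id := seqSigma.hom_ext (Y := fun _ => Z) fun n => by
    have idem : h.r ≫ h.i ≫ ∑ k ∈ Finset.range n, h.r ≫ h.i ≫ seqSigma.ι (fun _ => Z) (k + 1) =
        h.r ≫ h.i ≫ ∑ k ∈ Finset.range n, seqSigma.ι (fun _ => Z) (k + 1) := by
      simp [Preadditive.comp_sum]
    have telescope := eq_sub_of_add_eq <|
      (Finset.sum_range_succ' (seqSigma.ι.{w} fun _ => Z) n).symm.trans
        (Finset.sum_range_succ (seqSigma.ι.{w} fun _ => Z) n)
    simp [Preadditive.comp_sub, Preadditive.sub_comp, Preadditive.comp_add, Preadditive.sum_comp,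
      idem, telescope]
    abel

end Telescope

section Verdier

variable {T : Type u} [Category.{v} T] [Preadditive T] [HasZeroObject T]
  [HasShift T ℤ] [∀ n : ℤ, (shiftFunctor T n).Additive] [Pretriangulated T]

theorem distinguished_of_splitting {S : ShortComplex T} (h : S.Splitting) :
    Triangle.mk S.f S.g (0 : S.X₃ ⟶ S.X₁⟦(1 : ℤ)⟧) ∈ distinguishedTriangles := by
  have inl : S.f ≫ h.isoBinaryBiproduct.hom = biprod.inl :=
    biprod.hom_ext _ _ (by simp) (by simp)
  have snd : h.isoBinaryBiproduct.hom ≫ biprod.snd = S.g := by simp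
  exact isomorphic_distinguished _ (binaryBiproductTriangle_distinguished S.X₁ S.X₃) _ <|
    Triangle.isoMk _ _ (Iso.refl S.X₁) h.isoBinaryBiproduct (Iso.refl S.X₃)
      (inl.trans (Category.id_comp _).symm) ((Category.comp_id _).trans snd.symm)
      (zero_comp.trans comp_zero.symm)

namespace IsLocalizingSub

variable {L : Set T} (hL : IsLocalizingSub.{w} L)

include hL

theorem seqSigma_mem [HasCoproducts.{w} T] {Y : ℕ → T} (hY : ∀ n, Y n ∈ L) : seqSigma.{w} Y ∈ L :=
  hL.coprod_mem _ _ (coproductIsCoproduct _) fun n => hY n.down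

theorem mem_of_retract [HasCoproducts.{w} T] {A Z : T} (h : Retract A Z) (hZ : Z ∈ L) : A ∈ L :=
  hL.cone_mem _ (distinguished_of_splitting (retractSplitting.{w} h))
    (hL.seqSigma_mem fun _ => hZ) (hL.seqSigma_mem fun _ => hZ)

theorem isZero_verdierQ_obj_iff [HasCoproducts.{w} T] [IsTriangulated T] {X : T} :
    IsZero ((verdierQ L).obj X) ↔ X ∈ L := by
  have := hL.isClosedUnderIsomorphisms
  have := hL.isTriangulated
  refine ⟨fun h => ?_, fun h => ?_⟩
  · obtain ⟨X', s, hs, h0⟩ := (MorphismProperty.map_eq_iff_precomp (verdierQ L)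
      (ObjectProperty.trW (· ∈ L)) (𝟙 X) 0).1 (h.eq_of_src _ _)
    obtain ⟨C, p, q, hT, hC⟩ := hs
    obtain ⟨r, hr⟩ := Triangle.yoneda_exact₂ _ hT (𝟙 X) (h0.trans comp_zero)
    exact hL.mem_of_retract ⟨p, r, hr.symm⟩ hC
  · have : ObjectProperty.trW (· ∈ L) (0 : 0 ⟶ X) :=
      ⟨X, 𝟙 X, 0, contractible_distinguished₁ X, h⟩
    have := Localization.inverts (verdierQ L) _ _ this
    exact (asIso ((verdierQ L).map (0 : 0 ⟶ X))).isZero_iff.1 <|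
      (verdierQ L).map_isZero (isZero_zero T)

theorem isIso_verdierQ_map_iff [HasCoproducts.{w} T] [IsTriangulated T] {X Y : T} {f : X ⟶ Y} :
    IsIso ((verdierQ L).map f) ↔ ObjectProperty.trW (· ∈ L) f := by
  have := hL.isClosedUnderIsomorphisms
  have := hL.isTriangulated
  obtain ⟨Z, p, q, hT⟩ := distinguished_cocone_triangle f
  exact (Triangle.isZero₃_iff_isIso₁ _ ((verdierQ L).map_distinguished _ hT)).symm.trans
    (hL.isZero_verdierQ_obj_iff.trans (hL.trW_iff_obj₃_mem hT).symm)

theorem trW_of_comp_right [HasCoproducts.{w} T] [IsTriangulated T] {X Y Z : T} {f : X ⟶ Y}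
    {g : Y ⟶ Z} (hg : ObjectProperty.trW (· ∈ L) g) (hfg : ObjectProperty.trW (· ∈ L) (f ≫ g)) :
    ObjectProperty.trW (· ∈ L) f := by
  rw [← hL.isIso_verdierQ_map_iff] at hg hfg ⊢
  rw [Functor.map_comp] at hfg
  exact IsIso.of_isIso_comp_right _ ((verdierQ L).map g)

theorem mem_of_trW_of_factors [HasCoproducts.{w} T] [IsTriangulated T] {X Y Z : T} {f : X ⟶ Y}
    {g : Y ⟶ Z} (hfg : ObjectProperty.trW (· ∈ L) (f ≫ g)) (hY : Y ∈ L) : X ∈ L := by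
  have := hL.isClosedUnderIsomorphisms
  have := hL.isTriangulated
  rw [← hL.isIso_verdierQ_map_iff, Functor.map_comp] at hfg
  rw [← hL.isZero_verdierQ_obj_iff] at hY ⊢
  have := mono_of_mono ((verdierQ L).map f) ((verdierQ L).map g)
  exact hY.of_mono ((verdierQ L).map f)

theorem trW_id_sub_of_factors [HasCoproducts.{w} T] [IsTriangulated T] {X Y : T} (f : X ⟶ Y)
    (g : Y ⟶ X) (hY : Y ∈ L) : ObjectProperty.trW (· ∈ L) (𝟙 X - f ≫ g) := by
  have := hL.isClosedUnderIsomorphisms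
  have := hL.isTriangulated
  rw [← hL.isZero_verdierQ_obj_iff] at hY
  rw [← hL.isIso_verdierQ_map_iff, Functor.map_sub, Functor.map_comp, hY.eq_of_tgt
    ((verdierQ L).map f) 0, zero_comp, sub_zero,
    CategoryTheory.Functor.map_id]
  infer_instance

theorem trW_hom₃ [HasCoproducts.{w} T] [IsTriangulated T] {Tr Tr' : Triangle T} (φ : Tr ⟶ Tr')
    (h : Tr ∈ distinguishedTriangles) (h' : Tr' ∈ distinguishedTriangles)
    (h₁ : ObjectProperty.trW (· ∈ L) φ.hom₁) (h₂ : ObjectProperty.trW (· ∈ L) φ.hom₂) :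
    ObjectProperty.trW (· ∈ L) φ.hom₃ := by
  have := hL.isClosedUnderIsomorphisms
  have := hL.isTriangulated
  rw [← hL.isIso_verdierQ_map_iff] at h₁ h₂ ⊢
  exact isIso₃_of_isIso₁₂ ((verdierQ L).mapTriangle.map φ) ((verdierQ L).map_distinguished _ h)
    ((verdierQ L).map_distinguished _ h') h₁ h₂

end IsLocalizingSub

end Verdier

section CompactObjects

variable {T : Type u} [Category.{v} T] [Preadditive T]

section

variable {J : Type w} {f : J → T} {c : Cofan f} (hc : IsColimit c)

open Classical in
/-- The projection of a coproduct onto a summand, defined by means of zero morphisms, so that no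
product needs to exist. -/
noncomputable def cofanProj (i : J) : c.pt ⟶ f i :=
  Cofan.IsColimit.desc hc fun j => if h : j = i then eqToHom (by rw [h]) else 0

theorem inj_comp_cofanProj_self (i : J) : c.inj i ≫ cofanProj hc i = 𝟙 _ := by
  simp [cofanProj, Cofan.IsColimit.fac]

theorem inj_comp_cofanProj_of_ne {i j : J} (h : i ≠ j) : c.inj i ≫ cofanProj hc j = 0 := by
  simp [cofanProj, Cofan.IsColimit.fac, h]

/-- The idempotent of a coproduct projecting onto a finite subset of its summands. Compactness of
`x` means that every morphism from `x` is fixed by such an idempotent. -/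
noncomputable def cofanTrunc (s : Finset J) : c.pt ⟶ c.pt :=
  ∑ i ∈ s, cofanProj hc i ≫ c.inj i

theorem inj_comp_cofanTrunc {s : Finset J} {i : J} (hi : i ∈ s) :
    c.inj i ≫ cofanTrunc hc s = c.inj i := by
  rw [cofanTrunc, Preadditive.comp_sum, Finset.sum_eq_single i]
  · rw [← Category.assoc, inj_comp_cofanProj_self, Category.id_comp]
  · intro j _ hj
    rw [← Category.assoc, inj_comp_cofanProj_of_ne hc hj.symm, zero_comp]
  · exact fun h => absurd hi h

theorem comp_cofanTrunc_eq_sum {x : T} (h : x ⟶ c.pt) (s : Finset J) :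
    h ≫ cofanTrunc hc s = ∑ i ∈ s, (h ≫ cofanProj hc i) ≫ c.inj i := by
  simp [cofanTrunc, Preadditive.comp_sum]

theorem sum_comp_inj_comp_cofanTrunc {x : T} {s t : Finset J} (hst : s ⊆ t)
    (g : ∀ i, x ⟶ f i) :
    (∑ i ∈ s, g i ≫ c.inj i) ≫ cofanTrunc hc t = ∑ i ∈ s, g i ≫ c.inj i := by
  rw [Preadditive.sum_comp]
  exact Finset.sum_congr rfl fun i hi => by rw [Category.assoc, inj_comp_cofanTrunc hc (hst hi)]

theorem cofanTrunc_comp_cofanTrunc {s t : Finset J} (hst : s ⊆ t) :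
    cofanTrunc hc s ≫ cofanTrunc hc t = cofanTrunc hc s :=
  sum_comp_inj_comp_cofanTrunc hc hst (cofanProj hc)

theorem comp_cofanTrunc_of_subset {x : T} {h : x ⟶ c.pt} {s t : Finset J} (hst : s ⊆ t)
    (hs : h ≫ cofanTrunc hc s = h) : h ≫ cofanTrunc hc t = h := by
  rw [← hs, Category.assoc, cofanTrunc_comp_cofanTrunc hc hst]

theorem cofanHomComparison_single [DecidableEq J] {x : T} (j : J) (b : x ⟶ f j) :
    cofanHomComparison x f c (DFinsupp.single j b) = b ≫ c.inj j := by
  rw [cofanHomComparison]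
  convert DFinsupp.sumAddHom_single (fun i => AddMonoidHom.mk' (fun φ : x ⟶ f i => φ ≫ c.inj i)
    fun φ ψ => Preadditive.add_comp _ _ _ φ ψ (c.inj i)) j b
  rfl

theorem cofanHomComparison_comp_cofanProj {x : T} (g : Π₀ i, (x ⟶ f i)) (i : J) :
    cofanHomComparison x f c g ≫ cofanProj hc i = g i := by
  classical
  induction g using DFinsupp.induction with
  | h0 => simp
  | ha j b g _ _ ih =>
    rw [map_add, Preadditive.add_comp, ih, DFinsupp.add_apply, cofanHomComparison_single,
      Category.assoc]
    congr 1
    obtain rfl | hij := eq_or_ne j i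
    · simp [inj_comp_cofanProj_self]
    · rw [inj_comp_cofanProj_of_ne hc hij, DFinsupp.single_eq_of_ne hij.symm, comp_zero]

end

theorem isCompactObj_iff_exists_comp_cofanTrunc {x : T} : IsCompactObj.{w} x ↔
    ∀ ⦃J : Type w⦄ (f : J → T) (c : Cofan f) (hc : IsColimit c) (h : x ⟶ c.pt),
      ∃ s : Finset J, h ≫ cofanTrunc hc s = h := by
  classical
  refine ⟨fun H J f c hc h => ?_, fun H J f c hc => ⟨fun g g' hg => ?_, fun h => ?_⟩⟩
  · obtain ⟨g, rfl⟩ := (H f c hc).2 h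
    induction g using DFinsupp.induction with
    | h0 => exact ⟨∅, by simp⟩
    | ha j b g _ _ ih =>
      obtain ⟨s, hs⟩ := ih
      refine ⟨insert j s, ?_⟩
      rw [map_add, Preadditive.add_comp, comp_cofanTrunc_of_subset hc (Finset.subset_insert j s) hs,
        cofanHomComparison_single, Category.assoc,
        inj_comp_cofanTrunc hc (Finset.mem_insert_self j s)]
  · ext i
    rw [← cofanHomComparison_comp_cofanProj hc, hg, cofanHomComparison_comp_cofanProj]
  · obtain ⟨s, hs⟩ := H f c hc h
    refine ⟨∑ i ∈ s, DFinsupp.single i (h ≫ cofanProj hc i), ?_⟩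
    simp only [map_sum, cofanHomComparison_single]
    rw [← comp_cofanTrunc_eq_sum, hs]

theorem isCompactObj_iff_exists_eq_sum {x : T} : IsCompactObj.{w} x ↔
    ∀ ⦃J : Type w⦄ (f : J → T) (c : Cofan f) (_ : IsColimit c) (h : x ⟶ c.pt),
      ∃ (s : Finset J) (g : ∀ i, x ⟶ f i), h = ∑ i ∈ s, g i ≫ c.inj i := by
  rw [isCompactObj_iff_exists_comp_cofanTrunc]
  refine forall₃_congr fun J f c => forall₂_congr fun hc h => ⟨?_, ?_⟩
  · rintro ⟨s, hs⟩
    exact ⟨s, fun i => h ≫ cofanProj hc i, by rw [← comp_cofanTrunc_eq_sum, hs]⟩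
  · rintro ⟨s, g, rfl⟩
    exact ⟨s, sum_comp_inj_comp_cofanTrunc hc subset_rfl g⟩

theorem IsCompactObj.of_iso {x y : T} (hx : IsCompactObj.{w} x) (e : x ≅ y) :
    IsCompactObj.{w} y := by
  rw [isCompactObj_iff_exists_comp_cofanTrunc] at hx ⊢
  intro J f c hc h
  obtain ⟨s, hs⟩ := hx f c hc (e.hom ≫ h)
  exact ⟨s, by simpa using hs⟩

end CompactObjects

section CompactTriangulated

variable {T : Type u} [Category.{v} T] [Preadditive T] [HasShift T ℤ]
  [∀ n : ℤ, (shiftFunctor T n).Additive]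

theorem IsCompactObj.shift {x : T} (hx : IsCompactObj.{w} x) (n : ℤ) :
    IsCompactObj.{w} (x⟦n⟧) := by
  rw [isCompactObj_iff_exists_eq_sum] at hx ⊢
  intro J f c hc h
  let e : x ≅ x⟦n⟧⟦-n⟧ := (shiftShiftNeg x n).symm
  obtain ⟨hc'⟩ := nonempty_isColimit_shift (X := c.pt) (i := c.inj)
    (hc.ofIsoColimit (Cofan.ext (Iso.refl _))) (-n)
  obtain ⟨s, g, hg⟩ := hx _ _ hc' (e.hom ≫ h⟦-n⟧')
  refine ⟨s, fun i => (shiftFunctor T (-n)).preimage (e.inv ≫ g i),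
    (shiftFunctor T (-n)).map_injective ?_⟩
  rw [(Iso.eq_inv_comp e).2 hg]
  simp [Preadditive.comp_sum, Functor.map_sum, Functor.map_comp]

variable [HasZeroObject T] [Pretriangulated T]

theorem IsCompactObj.obj₃ {Tr : Triangle T} (h : Tr ∈ distinguishedTriangles)
    (h₁ : IsCompactObj.{w} Tr.obj₁) (h₂ : IsCompactObj.{w} Tr.obj₂) :
    IsCompactObj.{w} Tr.obj₃ := by
  classical
  replace h₁ := h₁.shift 1
  rw [isCompactObj_iff_exists_comp_cofanTrunc] at h₁ h₂ ⊢
  intro J f c hc g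
  obtain ⟨s, hs⟩ := h₂ f c hc (Tr.mor₂ ≫ g)
  obtain ⟨k, hk⟩ := Triangle.yoneda_exact₃ _ h (g - g ≫ cofanTrunc hc s) (by
    rw [Preadditive.comp_sub, ← Category.assoc, hs, sub_self])
  obtain ⟨t, ht⟩ := h₁ f c hc k
  have remainder : (g - g ≫ cofanTrunc hc s) ≫ cofanTrunc hc (s ∪ t) = g - g ≫ cofanTrunc hc s := by
    rw [hk, Category.assoc, comp_cofanTrunc_of_subset hc Finset.subset_union_right ht]
  have truncated : (g ≫ cofanTrunc hc s) ≫ cofanTrunc hc (s ∪ t) = g ≫ cofanTrunc hc s := by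
    rw [Category.assoc, cofanTrunc_comp_cofanTrunc hc Finset.subset_union_left]
  rw [Preadditive.sub_comp, truncated, sub_left_inj] at remainder
  exact ⟨s ∪ t, remainder⟩

instance isTriangulated_isCompactObj : ObjectProperty.IsTriangulated (C := T) IsCompactObj.{w} :=
  have : ObjectProperty.IsClosedUnderIsomorphisms (C := T) IsCompactObj.{w} :=
    ⟨fun e h => h.of_iso e⟩
  have : ObjectProperty.IsStableUnderShift (C := T) IsCompactObj.{w} ℤ :=
    ⟨fun n => ⟨fun _ h => h.shift n⟩⟩
  have : ObjectProperty.IsTriangulatedClosed₃ (C := T) IsCompactObj.{w} :=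
    .mk' fun _ h h₁ h₂ => IsCompactObj.obj₃ h h₁ h₂
  { exists_zero := ⟨0, isZero_zero T, isCompactObj_iff_exists_comp_cofanTrunc.2
      fun _ _ _ _ _ => ⟨∅, (isZero_zero T).eq_of_src _ _⟩⟩
    toIsTriangulatedClosed₂ := .of_isTriangulatedClosed₃ }

end CompactTriangulated

section Towers

section

variable {T : Type u} [Category.{v} T]

/-- The transition maps of a sequence, whose telescope is built with `seqShift`. -/
abbrev transition (F : ℕ ⥤ T) (n : ℕ) : F.obj n ⟶ F.obj (n + 1) :=
  F.map (homOfLE n.le_succ)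

theorem map_comp_transition (F : ℕ ⥤ T) {m n : ℕ} (h : m ≤ n) :
    F.map (homOfLE h) ≫ transition F n = F.map (homOfLE (h.trans n.le_succ)) := by
  rw [← F.map_comp, homOfLE_comp]

variable [HasCoproducts.{w} T]

theorem iterate_comp_seqShift (F : ℕ ⥤ T) {A : T} {n m : ℕ} (h : n ≤ m) (g : A ⟶ F.obj n) :
    (· ≫ seqShift.{w} (transition F))^[m - n] (g ≫ seqSigma.ι F.obj n) =
      g ≫ F.map (homOfLE h) ≫ seqSigma.ι F.obj m := by
  induction m, h using Nat.le_induction with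
  | base => simp
  | succ m h ih =>
    rw [Nat.succ_sub h, Function.iterate_succ_apply', ih, ← map_comp_transition F h]
    simp

variable [Preadditive T]

open Classical in
theorem exists_id_sub_seqShift_comp_eq_cofanProj (F : ℕ ⥤ T) (n : ℕ) :
    ∃ q : seqSigma.{w} F.obj ⟶ F.obj n, seqSigma.ι F.obj 0 ≫ q = F.map (homOfLE n.zero_le) ∧
      (𝟙 _ - seqShift.{w} (transition F)) ≫ q =
        cofanProj (coproductIsCoproduct fun n : ULift.{w} ℕ => F.obj n.down) ⟨n⟩ := by
  let hc := coproductIsCoproduct fun n : ULift.{w} ℕ => F.obj n.down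
  refine ⟨seqSigma.desc fun m => if h : m ≤ n then F.map (homOfLE h) else 0, by simp,
    seqSigma.hom_ext fun m => ?_⟩
  obtain rfl | hmn := eq_or_ne m n
  · refine Eq.trans ?_ (inj_comp_cofanProj_self hc ⟨m⟩).symm
    simp [Preadditive.sub_comp, Preadditive.comp_sub]
  · refine Eq.trans ?_ (inj_comp_cofanProj_of_ne hc
      (i := ⟨m⟩) (j := ⟨n⟩) (by simpa using hmn)).symm
    obtain h | h := hmn.lt_or_gt
    · simp [Preadditive.sub_comp, Preadditive.comp_sub, h.le, Nat.succ_le_of_lt h,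
        ← F.map_comp]
    · simp [Preadditive.sub_comp, Preadditive.comp_sub, h.not_ge, (h.trans m.lt_succ_self).not_ge]

end

variable {T : Type u} [Category.{v} T] [Preadditive T] [HasZeroObject T]
  [HasShift T ℤ] [∀ n : ℤ, (shiftFunctor T n).Additive] [Pretriangulated T]

/-- `G` is a weak generator of `T`: an object receiving no nonzero morphism from the shifts of `G`
vanishes. -/
def IsWeakGenerator (G : T) : Prop :=
  ∀ ⦃X : T⦄, (∀ (k : ℤ) (g : G⟦k⟧ ⟶ X), g = 0) → IsZero X

namespace IsWeakGenerator

variable {G : T} (hG : IsWeakGenerator G)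

include hG

theorem isIso_of_bijective {X Y : T} (f : X ⟶ Y)
    (injective : ∀ (k : ℤ) (g : G⟦k⟧ ⟶ X), g ≫ f = 0 → g = 0)
    (surjective : ∀ (k : ℤ) (g : G⟦k⟧ ⟶ Y), ∃ g', g' ≫ f = g) : IsIso f := by
  obtain ⟨Z, p, q, hT⟩ := distinguished_cocone_triangle f
  have fp : f ≫ p = 0 := comp_distTriang_mor_zero₁₂ _ hT
  have qf : q ≫ f⟦(1 : ℤ)⟧' = 0 := comp_distTriang_mor_zero₃₁ _ hT
  refine (Triangle.isZero₃_iff_isIso₁ _ hT).1 (hG fun k (g : G⟦k⟧ ⟶ Z) => ?_)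
  have connecting : g ≫ q = 0 := by
    let e := (shiftFunctorAdd' T (k - 1) 1 k (by lia)).app G
    obtain ⟨t, ht⟩ := (shiftFunctor T (1 : ℤ)).map_surjective (e.inv ≫ g ≫ q)
    have ht0 : t = 0 := injective (k - 1) t <| (shiftFunctor T (1 : ℤ)).map_injective <| by
      rw [Functor.map_comp, ht, Category.assoc, Category.assoc, qf]
      simp
    rw [← cancel_epi e.inv, ← ht, ht0]
    simp
  obtain ⟨g', rfl : g = g' ≫ p⟩ := Triangle.coyoneda_exact₃ _ hT g connecting
  obtain ⟨g'', rfl⟩ := surjective k g'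
  exact (Category.assoc _ _ _).trans ((congrArg _ fp).trans comp_zero)

theorem isIso_id_sub_of_locally_nilpotent {X : T} (s : X ⟶ X)
    (hs : ∀ (k : ℤ) (g : G⟦k⟧ ⟶ X), ∃ n : ℕ, (· ≫ s)^[n] g = 0) : IsIso (𝟙 X - s) := by
  refine hG.isIso_of_bijective _ (fun k g hg => ?_) fun k g => ?_
  · obtain ⟨n, hn⟩ := hs k g
    rw [Preadditive.comp_sub, Category.comp_id, sub_eq_zero] at hg
    rwa [Function.iterate_fixed hg.symm] at hn
  · obtain ⟨n, hn⟩ := hs k g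
    refine ⟨∑ i ∈ Finset.range n, (· ≫ s)^[i] g, ?_⟩
    have telescope := Finset.sum_range_sub' (fun i => (· ≫ s)^[i] g) n
    simp only [Function.iterate_succ_apply', hn, Function.iterate_zero_apply, sub_zero]
      at telescope
    simp only [Preadditive.sum_comp, Preadditive.comp_sub, Category.comp_id]
    exact (Finset.sum_sub_distrib _ _).symm.trans telescope

end IsWeakGenerator

/-- Every morphism from a shift of `G` to a term of the sequence `F` eventually dies. When `G` is a
compact weak generator, the homotopy colimit of such a sequence vanishes. -/
def IsEventuallyGhost (G : T) (F : ℕ ⥤ T) : Prop :=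
  ∀ ⦃k : ℤ⦄ ⦃n : ℕ⦄ (g : G⟦k⟧ ⟶ F.obj n), ∃ m, ∃ h : n ≤ m, g ≫ F.map (homOfLE h) = 0

variable [HasCoproducts.{w} T]

namespace IsEventuallyGhost

variable {G : T} {F : ℕ ⥤ T} (hF : IsEventuallyGhost G F) (hG : IsCompactObj.{w} G)
  (hG' : IsWeakGenerator G)

include hF hG hG'

theorem isIso_id_sub_seqShift : IsIso (𝟙 _ - seqShift.{w} (transition F)) := by
  refine hG'.isIso_id_sub_of_locally_nilpotent _ fun k h => ?_
  obtain ⟨s, g, rfl⟩ := isCompactObj_iff_exists_eq_sum.1 (hG.shift k) _ _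
    (coproductIsCoproduct fun n : ULift.{w} ℕ => F.obj n.down) h
  let step : (G⟦k⟧ ⟶ seqSigma.{w} F.obj) →+ (G⟦k⟧ ⟶ seqSigma.{w} F.obj) :=
    Preadditive.rightComp _ (seqShift.{w} (transition F))
  refine Finset.sum_induction _ (fun h => ∃ n : ℕ, step^[n] h = 0) ?_ ⟨0, rfl⟩ fun n _ => ?_
  · rintro h h' ⟨n, hn⟩ ⟨n', hn'⟩
    refine ⟨n + n', ?_⟩
    rw [iterate_map_add, Function.iterate_add_apply _ n n' h', hn', add_comm n,
      Function.iterate_add_apply, hn, iterate_map_zero, iterate_map_zero, add_zero]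
  · obtain ⟨m, hnm, hm⟩ := hF (g n)
    exact ⟨m - n.down,
      (iterate_comp_seqShift F hnm (g n)).trans (by rw [reassoc_of% hm, zero_comp])⟩

theorem exists_comp_map_eq_zero {C : T} (hC : IsCompactObj.{w} C) (h : C ⟶ F.obj 0) :
    ∃ n : ℕ, h ≫ F.map (homOfLE n.zero_le) = 0 := by
  have := hF.isIso_id_sub_seqShift hG hG'
  let hc := coproductIsCoproduct fun n : ULift.{w} ℕ => F.obj n.down
  obtain ⟨h', hh'⟩ : ∃ h', h' ≫ (𝟙 _ - seqShift.{w} (transition F)) = h ≫ seqSigma.ι F.obj 0 :=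
    ⟨_, (Category.assoc _ _ _).trans ((congrArg _ (IsIso.inv_hom_id _)).trans (Category.comp_id _))⟩
  obtain ⟨s, hs⟩ := isCompactObj_iff_exists_comp_cofanTrunc.1 hC _ _ hc h'
  obtain ⟨⟨n⟩, hn⟩ := Infinite.exists_notMem_finset s
  obtain ⟨q, hq, hq'⟩ := exists_id_sub_seqShift_comp_eq_cofanProj F n
  refine ⟨n, ?_⟩
  rw [← hq, ← Category.assoc, ← hh', Category.assoc, hq', ← hs, comp_cofanTrunc_eq_sum,
    Preadditive.sum_comp]
  exact Finset.sum_eq_zero fun i hi => (Category.assoc _ _ _).trans <|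
    (congrArg _ (inj_comp_cofanProj_of_ne hc (ne_of_mem_of_not_mem hi hn))).trans comp_zero

theorem mem_of_forall_trW [IsTriangulated T] {L : Set T} (hL : IsLocalizingSub.{w} L)
    (hFL : ∀ n, ObjectProperty.trW (· ∈ L) (transition F n)) : F.obj 0 ∈ L := by
  have := hF.isIso_id_sub_seqShift hG hG'
  have := hL.isClosedUnderIsomorphisms
  have := hL.isTriangulated
  have fromZero (n : ℕ) : ObjectProperty.trW (· ∈ L) (F.map (homOfLE n.zero_le)) := by
    induction n with
    | zero => exact F.map_id 0 ▸ MorphismProperty.id_mem _ _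
    | succ n ih =>
      exact map_comp_transition F n.zero_le ▸ MorphismProperty.comp_mem _ _ _ ih (hFL n)
  let w : seqSigma.{w} (fun _ => F.obj 0) ⟶ seqSigma.{w} F.obj :=
    seqSigma.desc fun n => F.map (homOfLE n.zero_le) ≫ seqSigma.ι F.obj n
  have hw : ObjectProperty.trW (· ∈ L) w :=
    hL.trW_of_isColimit (coproductIsCoproduct _) (coproductIsCoproduct _)
      (fun n => Sigma.ι_desc _ n) fun n => fromZero n.down
  let ρ := Retract.refl (F.obj 0)
  have comm : (𝟙 _ - seqShift.{w} fun _ => ρ.r ≫ ρ.i) ≫ w =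
      w ≫ (𝟙 _ - seqShift.{w} (transition F)) :=
    seqSigma.hom_ext fun n => by
      simp [w, ρ, Preadditive.sub_comp, Preadditive.comp_sub, ← map_comp_transition F n.zero_le]
  refine (hL.trW_iff_obj₃_mem (distinguished_of_splitting (retractSplitting.{w} ρ))).1
    (hL.trW_of_comp_right hw ?_)
  exact comm ▸ MorphismProperty.comp_mem _ _ _ hw (ObjectProperty.trW_of_isIso _ _)

end IsEventuallyGhost

end Towers

section Cellular

variable {T : Type u} [Category.{v} T] [Preadditive T] [HasZeroObject T]
  [HasShift T ℤ] [∀ n : ℤ, (shiftFunctor T n).Additive] [Pretriangulated T]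

/-- `t : Y ⟶ Y'` is the cone inclusion of a morphism `∐ⱼ G⟦k j⟧ ⟶ Y`, that is, `Y'` is obtained
from `Y` by attaching cells of shape `G`. -/
def IsCellAttachment (G : T) {Y Y' : T} (t : Y ⟶ Y') : Prop :=
  ∃ (J : Type w) (k : J → ℤ) (S : T) (i : ∀ j, G⟦k j⟧ ⟶ S) (_ : IsColimit (Cofan.mk S i))
    (a : S ⟶ Y) (b : Y' ⟶ S⟦(1 : ℤ)⟧), Triangle.mk a t b ∈ distinguishedTriangles

theorem IsLocalizingSub.trW_of_isCellAttachment {L : Set T} (hL : IsLocalizingSub.{w} L) {G : T}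
    (hG : G ∈ L) {Y Y' : T} {t : Y ⟶ Y'} (ht : IsCellAttachment.{w} G t) :
    ObjectProperty.trW (· ∈ L) t := by
  obtain ⟨J, k, S, i, hS, a, b, hT⟩ := ht
  exact (hL.trW_iff_obj₃_mem (rot_of_distTriang _ hT)).2 <|
    hL.shift_mem 1 (hL.coprod_mem _ _ hS fun j => hL.shift_mem (k j) hG)

section

variable [HasCoproducts.{w} T] (G : T) [∀ (k : ℤ) (X : T), Small.{w} (G⟦k⟧ ⟶ X)]

theorem exists_isCellAttachment (Y : T) :
    ∃ (Y' : T) (t : Y ⟶ Y'), IsCellAttachment.{w} G t ∧ ∀ (k : ℤ) (g : G⟦k⟧ ⟶ Y), g ≫ t = 0 := by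
  let J := Σ k : ℤ, Shrink.{w} (G⟦k⟧ ⟶ Y)
  let a : (∐ fun j : J => G⟦j.1⟧) ⟶ Y := Sigma.desc fun j => (equivShrink _).symm j.2
  obtain ⟨Y', t, b, hT⟩ := distinguished_cocone_triangle a
  refine ⟨Y', t, ⟨J, _, _, _, coproductIsCoproduct _, a, b, hT⟩, fun k g => ?_⟩
  have factor : g = Sigma.ι (fun j : J => G⟦j.1⟧) ⟨k, equivShrink _ g⟩ ≫ a := by simp [a]
  rw [factor, Category.assoc]
  exact (congrArg _ (comp_distTriang_mor_zero₁₂ _ hT)).trans comp_zero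

theorem exists_cellular_tower (X : T) :
    ∃ F : ℕ ⥤ T, F.obj 0 = X ∧ IsEventuallyGhost G F ∧
      ∀ n, IsCellAttachment.{w} G (transition F n) := by
  choose next t cell kill using exists_isCellAttachment.{w} G
  let obj (n : ℕ) : T := n.rec X fun _ => next
  let F : ℕ ⥤ T := Functor.ofSequence (X := obj) fun n => t (obj n)
  have hF (n : ℕ) : transition F n = t (obj n) := Functor.ofSequence_map_homOfLE_succ _ n
  refine ⟨F, rfl, fun k n g => ⟨n + 1, n.le_succ, ?_⟩, fun n => ?_⟩
  · exact (congrArg (g ≫ ·) (hF n)).trans (kill (obj n) k g)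
  · exact hF n ▸ cell (obj n)

end

theorem IsWeakGenerator.mem_isLocalizingSub [IsTriangulated T] [HasCoproducts.{w} T] {G : T}
    [∀ (k : ℤ) (X : T), Small.{w} (G⟦k⟧ ⟶ X)] (hG : IsWeakGenerator G) (hG' : IsCompactObj.{w} G)
    {L : Set T} (hL : IsLocalizingSub.{w} L) (hGL : G ∈ L) (X : T) : X ∈ L := by
  obtain ⟨F, rfl, ghost, cell⟩ := exists_cellular_tower.{w} G X
  exact ghost.mem_of_forall_trW hG' hG hL fun n => hL.trW_of_isCellAttachment hGL (cell n)

end Cellular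

section Factorization

variable {T : Type u} [Category.{v} T] [Preadditive T] [HasZeroObject T]
  [HasShift T ℤ] [∀ n : ℤ, (shiftFunctor T n).Additive] [Pretriangulated T]
  (P : ObjectProperty T) [P.IsClosedUnderIsomorphisms] [P.IsTriangulated]

/-- The morphism `f` factors through an object satisfying `P`. For a triangulated `P` these
morphisms are closed under addition. -/
def FactorsThroughProp {X Y : T} (f : X ⟶ Y) : Prop :=
  ∃ (B : T) (u : X ⟶ B) (v : B ⟶ Y), P B ∧ u ≫ v = f

variable {P}

theorem FactorsThroughProp.add {X Y : T} {f g : X ⟶ Y} (hf : FactorsThroughProp P f)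
    (hg : FactorsThroughProp P g) : FactorsThroughProp P (f + g) := by
  obtain ⟨B, u, v, hB, rfl⟩ := hf
  obtain ⟨B', u', v', hB', rfl⟩ := hg
  exact ⟨B ⊞ B', biprod.lift u u', biprod.desc v v',
    P.prop_of_iso (biprod.isoProd B B').symm (P.prop_prod B B' hB hB'), by simp⟩

theorem exists_retract_factor_cofan {x : T} (hx : IsCompactObj.{w} x) {J : Type w} {f : J → T}
    {c : Cofan f} (hc : IsColimit c) (hf : ∀ j, P (f j)) (h : x ⟶ c.pt) :
    ∃ (A : T) (ρ : Retract A c.pt), P A ∧ h ≫ ρ.r ≫ ρ.i = h := by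
  classical
  obtain ⟨s, hs⟩ := isCompactObj_iff_exists_comp_cofanTrunc.1 hx f c hc h
  have : HasFiniteBiproducts T := .of_hasFiniteProducts
  let e : Fin s.card ≃ s := s.equivFin.symm
  have truncation : (biproduct.lift fun j => cofanProj hc (e j).1) ≫
      (biproduct.desc fun j => c.inj (e j).1) = cofanTrunc hc s := by
    rw [biproduct.lift_desc, e.sum_comp fun j => cofanProj hc j.1 ≫ c.inj j.1]
    exact Finset.sum_coe_sort s fun j => cofanProj hc j ≫ c.inj j
  refine ⟨⨁ fun j => f (e j), ⟨biproduct.desc fun j => c.inj (e j).1, biproduct.lift fun j =>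
    cofanProj hc (e j).1, biproduct.hom_ext' _ _ fun i => biproduct.hom_ext _ _ fun j => ?_⟩,
    P.prop_of_iso (biproduct.isoProduct _).symm (P.prop_product fun j => hf (e j)),
    by rwa [truncation]⟩
  obtain rfl | hij := eq_or_ne i j
  · simp [inj_comp_cofanProj_self]
  · simpa [biproduct.ι_π_ne _ hij] using
      inj_comp_cofanProj_of_ne hc (Subtype.coe_ne_coe.2 (e.injective.ne hij))

theorem FactorsThroughProp.of_comp_isCellAttachment (hP : P ≤ IsCompactObj.{w}) {G : T} (hG : P G)
    {Y Y' : T} {t : Y ⟶ Y'} (ht : IsCellAttachment.{w} G t) {Z : T} (hZ : IsCompactObj.{w} Z)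
    {f : Z ⟶ Y} (h : FactorsThroughProp P (f ≫ t)) : FactorsThroughProp P f := by
  obtain ⟨J, k, S, i, hS, a, b, hT⟩ := ht
  obtain ⟨B', u, v, hB', huv⟩ := h
  obtain ⟨hS'⟩ := nonempty_isColimit_shift hS 1
  obtain ⟨A, ρ : Retract A (S⟦(1 : ℤ)⟧), hA, hρ⟩ :=
    exists_retract_factor_cofan (hP _ hB') hS'
    (P := P) (fun j => P.le_shift (1 : ℤ) _ (P.le_shift (k j) _ hG)) (v ≫ b)
  have vbρ : (v ≫ b ≫ ρ.r) ≫ ρ.i = v ≫ b := by simpa only [Category.assoc] using hρ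
  obtain ⟨B, p, q, hT'⟩ := distinguished_cocone_triangle₁ (v ≫ b ≫ ρ.r)
  have hB : P B := P.ext_of_isTriangulatedClosed₁ _ hT' hB' hA
  obtain ⟨β : B ⟶ Y, hβ : p ≫ v = β ≫ t, -⟩ :=
    complete_distinguished_triangle_morphism₁ _ _ hT' (rot_of_distTriang _ hT) v ρ.i vbρ
  have tb : t ≫ b = 0 := comp_distTriang_mor_zero₂₃ _ hT
  have uvb : u ≫ v ≫ b ≫ ρ.r = 0 := by simp [reassoc_of% huv, reassoc_of% tb]
  obtain ⟨u' : Z ⟶ B, rfl : u = u' ≫ p⟩ := Triangle.coyoneda_exact₂ _ hT' u uvb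
  have agree : (f - u' ≫ β) ≫ t = 0 := by simp [Preadditive.sub_comp, ← hβ, ← huv]
  obtain ⟨w : Z ⟶ S, hw : f - u' ≫ β = w ≫ a⟩ := Triangle.coyoneda_exact₂ _ hT _ agree
  obtain ⟨A', ρ' : Retract A' S, hA', hρ'⟩ :=
    exists_retract_factor_cofan hZ hS (fun j => P.le_shift (k j) _ hG) w
  rw [← sub_add_cancel f (u' ≫ β), hw, ← hρ']
  exact .add ⟨A', w ≫ ρ'.r, ρ'.i ≫ a, hA', by simp⟩ ⟨B, u', β, hB, rfl⟩

theorem exists_retract_of_isCompactObj (hP : P ≤ IsCompactObj.{w}) {G : T} (hG : P G)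
    [HasCoproducts.{w} T] [∀ (k : ℤ) (X : T), Small.{w} (G⟦k⟧ ⟶ X)] (hG' : IsWeakGenerator G)
    {C : T} (hC : IsCompactObj.{w} C) : ∃ K, P K ∧ Nonempty (Retract C K) := by
  obtain ⟨F, rfl, ghost, cell⟩ := exists_cellular_tower.{w} G C
  obtain ⟨n, hn⟩ := ghost.exists_comp_map_eq_zero (hP _ hG) hG' hC (𝟙 _)
  have factors (m : ℕ) (hm : m ≤ n) :
      FactorsThroughProp P (𝟙 (F.obj 0) ≫ F.map (homOfLE m.zero_le)) := by
    induction hm using Nat.decreasingInduction with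
    | self =>
      obtain ⟨Z, -, hPZ⟩ := P.exists_prop_of_containsZero
      exact ⟨Z, 0, 0, hPZ, by rw [hn, zero_comp]⟩
    | of_succ m _ ih =>
      refine .of_comp_isCellAttachment hP hG (cell m) hC ?_
      rwa [Category.assoc, map_comp_transition]
  obtain ⟨K, i, r, hK, hir⟩ := factors 0 n.zero_le
  exact ⟨K, hK, ⟨i, r, by simpa using hir⟩⟩

theorem exists_loc_eq_of_isCompactObj [IsTriangulated T] (hP : P ≤ IsCompactObj.{w}) {G : T}
    (hG : P G) [HasCoproducts.{w} T] [∀ (k : ℤ) (X : T), Small.{w} (G⟦k⟧ ⟶ X)]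
    (hG' : IsWeakGenerator G) {C : T} (hC : IsCompactObj.{w} C) :
    ∃ E, P E ∧ Loc.{w} {E} = Loc.{w} {C} := by
  obtain ⟨K, hK, ⟨ρ⟩⟩ := exists_retract_of_isCompactObj hP hG hG' hC
  obtain ⟨E, p, q, hT⟩ := distinguished_cocone_triangle (𝟙 K - ρ.r ≫ ρ.i)
  have hE : P E := P.ext_of_isTriangulatedClosed₃ _ hT hK hK
  have hLE := isLocalizingSub_loc.{w} {E}
  have hLC := isLocalizingSub_loc.{w} {C}
  refine ⟨E, hE, ((loc_singleton_subset_iff hLC).2 ?_).antisymm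
    ((loc_singleton_subset_iff hLE).2 ?_)⟩
  · exact (hLC.trW_iff_obj₃_mem hT).1 (hLC.trW_id_sub_of_factors _ _ (mem_loc_self C))
  · have hiE : ρ.i ≫ (𝟙 K - ρ.r ≫ ρ.i) = 0 := by simp [Preadditive.comp_sub]
    let d : E⟦(-1 : ℤ)⟧ ⟶ K := (Triangle.mk (𝟙 K - ρ.r ≫ ρ.i) p q).invRotate.mor₁
    obtain ⟨s : C ⟶ E⟦(-1 : ℤ)⟧, hs : ρ.i = s ≫ d⟩ :=
      Triangle.coyoneda_exact₂ _ (inv_rot_of_distTriang _ hT) ρ.i hiE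
    exact hLE.mem_of_retract ⟨s, d ≫ ρ.r, by rw [← Category.assoc, ← hs, ρ.retract]⟩
      (hLE.shift_mem (-1) (mem_loc_self E))

end Factorization

section Linear

variable {R : Type*} [CommRing R] {T : Type u} [Category.{v} T] [Preadditive T] [Linear R T]
  [HasZeroObject T] [HasShift T ℤ] [∀ n : ℤ, (shiftFunctor T n).Additive]
  [∀ n : ℤ, (shiftFunctor T n).Linear R] [Pretriangulated T] [IsTriangulated T]
  [HasCoproducts.{w} T] {L : Set T} (hL : IsLocalizingSub.{w} L)

include hL

theorem IsLocalizingSub.setOf_trW_smul_id (f : R) :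
    IsLocalizingSub.{w} {X : T | ObjectProperty.trW (· ∈ L) (f • 𝟙 X)} := by
  have := hL.isClosedUnderIsomorphisms
  have := hL.isTriangulated
  refine ⟨?_, fun {X Y} e hX => ?_, fun n X hX => ?_, fun Tr hTr h₁ h₂ => ?_,
    fun {J} Y c hc hY => ?_⟩
  · rw [Set.mem_ofPred_eq, (isZero_zero T).eq_of_src (f • 𝟙 (0 : T)) (𝟙 0)]
    exact MorphismProperty.id_mem _ _
  · exact (MorphismProperty.arrow_mk_iso_iff (ObjectProperty.trW (· ∈ L))
      (Arrow.isoMk (f := .mk (f • 𝟙 X)) (g := .mk (f • 𝟙 Y)) e e (by simp))).1 hX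
  · have := (ObjectProperty.trW (· ∈ L)).shift hX n
    simpa using this
  · exact hL.trW_hom₃ ({ hom₁ := f • 𝟙 _, hom₂ := f • 𝟙 _, hom₃ := f • 𝟙 _ } : Tr ⟶ Tr)
      hTr hTr h₁ h₂
  · exact hL.trW_of_isColimit hc hc (fun j => by simp) hY

omit hL

theorem mem_loc_of_smul_pow_eq_zero {f : R} {X Y E : T} {p : Y ⟶ E} {q : E ⟶ Y⟦(1 : ℤ)⟧}
    (hT : Triangle.mk (f • 𝟙 Y) p q ∈ distinguishedTriangles) (hX : X ∈ Loc.{w} {Y}) {n : ℕ}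
    (hn : f ^ n • 𝟙 X = 0) : X ∈ Loc.{w} {E} := by
  have hE := isLocalizingSub_loc.{w} {E}
  have := hE.isClosedUnderIsomorphisms
  have := hE.isTriangulated
  have invertible : ObjectProperty.trW (· ∈ Loc.{w} {E}) (f • 𝟙 X) :=
    (loc_singleton_subset_iff (hE.setOf_trW_smul_id f)).2
      ((hE.trW_iff_obj₃_mem hT).2 (mem_loc_self E)) hX
  have pow_invertible (m : ℕ) : ObjectProperty.trW (· ∈ Loc.{w} {E}) (f ^ m • 𝟙 X) := by
    induction m with
    | zero => simpa using MorphismProperty.id_mem _ X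
    | succ m ih =>
      have : f ^ (m + 1) • 𝟙 X = (f ^ m • 𝟙 X) ≫ (f • 𝟙 X) := by simp [smul_smul, pow_succ']
      exact this ▸ MorphismProperty.comp_mem _ _ _ ih invertible
  refine hE.mem_of_trW_of_factors (f := (0 : X ⟶ 0)) (g := (0 : 0 ⟶ X)) ?_ hE.zero_mem
  simpa only [hn, comp_zero] using pow_invertible n

end Linear

section LocalizationCoproducts

variable {C D : Type*} [Category* C] [Category* D] (F : C ⥤ D) {J : Type*}
  [HasCoproductsOfShape J C]

theorem preservesCoproductsOfShape_of_bijective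
    (h : ∀ (K : J → C) (Y : D), Function.Bijective
      fun (g : F.obj (∐ K) ⟶ Y) j => F.map (Limits.Sigma.ι K j) ≫ g) :
    PreservesColimitsOfShape (Discrete J) F := by
  have (K : J → C) : PreservesColimit (Discrete.functor K) F := by
    choose desc hdesc using fun Y => (h K Y).surjective
    refine preservesColimit_of_preserves_colimit_cocone (coproductIsCoproduct K)
      ((isColimitMapCoconeCofanMkEquiv F K _).symm ?_)
    exact Cofan.IsColimit.mk _ (fun s => desc s.pt s.inj) (fun s => congrFun (hdesc s.pt s.inj))
      fun s m hm => (h K s.pt).injective ((funext hm).trans (hdesc s.pt s.inj).symm)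
  exact preservesColimitsOfShape_of_discrete F

theorem hasCoproductsOfShape_of_essSurj [F.EssSurj] [PreservesColimitsOfShape (Discrete J) F] :
    HasCoproductsOfShape J D where
  has_colimit G := hasColimit_of_iso
    (F := Discrete.functor (fun j => F.objPreimage (G.obj ⟨j⟩)) ⋙ F)
    (Discrete.natIso fun j => (F.objObjPreimageIso (G.obj j)).symm)

variable (W : MorphismProperty C) [F.IsLocalization W] [W.HasRightCalculusOfFractions]
  [W.IsStableUnderCoproductsOfShape J]

open Localization

include W

theorem exists_map_sigma_ι_comp_eq (K : J → C) {Y : D} (f : ∀ j, F.obj (K j) ⟶ Y) :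
    ∃ g : F.obj (∐ K) ⟶ Y, ∀ j, F.map (Limits.Sigma.ι K j) ≫ g = f j := by
  have := essSurj F W
  let e := F.objObjPreimageIso Y
  choose α hα using fun j => exists_rightFraction F W (f j ≫ e.inv)
  let t := Limits.Sigma.map fun j => (α j).s
  have : IsIso (F.map t) := inverts F W _ (MorphismProperty.colimMap _ fun j => (α j.as).hs)
  have (j : J) : IsIso (F.map (α j).s) := inverts F W _ (α j).hs
  have ι_comp (j) : F.map (α j).s ≫ F.map (Limits.Sigma.ι K j) =
      F.map (Limits.Sigma.ι _ j) ≫ F.map t := by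
    simp only [← F.map_comp, t, Limits.Sigma.ι_map]
  refine ⟨inv (F.map t) ≫ F.map (Limits.Sigma.desc fun j => (α j).f) ≫ e.hom, fun j => ?_⟩
  rw [← cancel_mono e.inv, hα, ← cancel_epi (F.map (α j).s),
    MorphismProperty.RightFraction.map_s_comp_map]
  simp [reassoc_of% ι_comp, ← F.map_comp]

variable [W.HasLeftCalculusOfFractions]

theorem hom_ext_of_map_sigma_ι_comp (K : J → C) {Y : D} {f g : F.obj (∐ K) ⟶ Y}
    (h : ∀ j, F.map (Limits.Sigma.ι K j) ≫ f = F.map (Limits.Sigma.ι K j) ≫ g) : f = g := by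
  have := essSurj F W
  let e := F.objObjPreimageIso Y
  obtain ⟨α, hf, hg⟩ := exists_leftFraction₂ F W (f ≫ e.inv) (g ≫ e.inv)
  have : IsIso (F.map α.s) := inverts F W _ α.hs
  have hf : f ≫ e.inv ≫ F.map α.s = F.map α.f := by
    rw [← Category.assoc, hf]; exact α.fst.map_comp_map_s F _
  have hg : g ≫ e.inv ≫ F.map α.s = F.map α.f' := by
    rw [← Category.assoc, hg]; exact α.snd.map_comp_map_s F _
  have eq (j) : F.map (Limits.Sigma.ι K j ≫ α.f) = F.map (Limits.Sigma.ι K j ≫ α.f') := by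
    simp only [F.map_comp, ← hf, ← hg, reassoc_of% h j]
  choose Z t ht h_comp using fun j => (MorphismProperty.map_eq_iff_precomp F W _ _).1 (eq j)
  have : IsIso (F.map (Limits.Sigma.map t)) :=
    inverts F W _ (MorphismProperty.colimMap _ fun j => ht j.as)
  rw [← cancel_mono (e.inv ≫ F.map α.s), hf, hg, ← cancel_epi (F.map (Limits.Sigma.map t)),
    ← F.map_comp, ← F.map_comp]
  congr 1
  exact Limits.Sigma.hom_ext _ _ fun j => by simpa using h_comp j

theorem preservesCoproductsOfShape_of_isLocalization :
    PreservesColimitsOfShape (Discrete J) F :=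
  preservesCoproductsOfShape_of_bijective F fun K _ =>
    ⟨fun _ _ h => hom_ext_of_map_sigma_ι_comp F W K (congrFun h),
      fun f => (exists_map_sigma_ι_comp_eq F W K f).imp fun _ => funext⟩

end LocalizationCoproducts

section ComplexCoproducts

variable {C : Type u} [Category.{v} C] {ι : Type*} {c : ComplexShape ι} {J : Type*}
  [HasCoproductsOfShape J C]

theorem nonempty_homotopy_zero_of_sigma_ι [Preadditive C] {K : J → HomologicalComplex C c}
    {L : HomologicalComplex C c} {g : ∐ K ⟶ L}
    (h : ∀ j, Nonempty (Homotopy (Limits.Sigma.ι K j ≫ g) 0)) : Nonempty (Homotopy g 0) := by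
  let h j := (h j).some
  let hc (n : ι) := isColimitMapCoconeCofanMkEquiv _ _ _
    (isColimitOfPreserves (HomologicalComplex.eval C c n) (coproductIsCoproduct K))
  let H (n m : ι) : (∐ K).X n ⟶ L.X m := Cofan.IsColimit.desc (hc n) fun j => (h j).hom n m
  have ι_comp (n m : ι) (j : J) : (Limits.Sigma.ι K j).f n ≫ H n m = (h j).hom n m :=
    Cofan.IsColimit.fac (hc n) _ j
  refine ⟨⟨H, fun n m hnm => Cofan.IsColimit.hom_ext (hc n) _ _ fun j => ?_, fun n =>
    Cofan.IsColimit.hom_ext (hc n) _ _ fun j => ?_⟩⟩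
  · exact (ι_comp n m j).trans (((h j).zero n m hnm).trans comp_zero.symm)
  · change (Limits.Sigma.ι K j).f n ≫ g.f n = (Limits.Sigma.ι K j).f n ≫ _
    rw [Preadditive.comp_add, Preadditive.comp_add, ← dNext_comp_left, ← prevD_comp_left,
      ← HomologicalComplex.comp_f, (h j).comm n]
    simp [ι_comp]

instance preservesCoproductsOfShape_homotopyCategory_quotient [Preadditive C] :
    PreservesColimitsOfShape (Discrete J) (HomotopyCategory.quotient C c) := by
  refine preservesCoproductsOfShape_of_bijective _ fun K L => ?_
  obtain ⟨L, rfl⟩ := HomotopyCategory.quotient_obj_surjective L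
  refine ⟨fun f g h => ?_, fun f => ?_⟩
  · obtain ⟨f, rfl⟩ := (HomotopyCategory.quotient C c).map_surjective f
    obtain ⟨g, rfl⟩ := (HomotopyCategory.quotient C c).map_surjective g
    obtain ⟨H⟩ := nonempty_homotopy_zero_of_sigma_ι (g := f - g) fun j =>
      ⟨HomotopyCategory.homotopyOfEq _ _ (by
        simpa [Functor.map_sub, sub_eq_zero] using congrFun h j)⟩
    exact HomotopyCategory.eq_of_homotopy _ _ (Homotopy.equivSubZero.symm H)
  · choose f' hf' using fun j => (HomotopyCategory.quotient C c).map_surjective (f j)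
    exact ⟨(HomotopyCategory.quotient C c).map (Limits.Sigma.desc f'), funext fun j => by
      simp [← Functor.map_comp, hf']⟩

theorem exactAt_of_isColimit_cofan [Abelian C] [HasExactColimitsOfShape (Discrete J) C]
    {K : J → HomologicalComplex C c} {k : Cofan K} (hk : IsColimit k) {n : ι}
    (hK : ∀ j, (K j).ExactAt n) : k.pt.ExactAt n := by
  let S := ShortComplex.FunctorEquivalence.inverse (Discrete J) C |>.obj
    (Discrete.functor K ⋙ HomologicalComplex.shortComplexFunctor C c n)
  have hS : S.Exact := (JointlyReflectIsomorphisms.exact_iff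
    (F := fun j => (evaluation (Discrete J) C).obj j)
    ⟨fun f h => (NatTrans.isIso_iff_isIso_app f).2 h⟩ S).2 fun j => hK j.as
  let hk' (m : ι) := isColimitOfPreserves (HomologicalComplex.eval C c m) hk
  exact colim.exact_mapShortComplex hS (hk' (c.prev n)) (hk' n) (hk' (c.next n))
    (k.pt.d _ _) (k.pt.d _ _) (fun j => (k.ι.app j).comm _ _) (fun j => (k.ι.app j).comm _ _)

end ComplexCoproducts

section DerivedCategoryCoproducts

variable (C : Type u) [Category.{v} C] [Abelian C] [HasCoproducts.{w} C] [AB4OfSize.{w} C]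

theorem isLocalizingSub_acyclic :
    IsLocalizingSub.{w} {K | HomotopyCategory.subcategoryAcyclic C K} := by
  let P := HomotopyCategory.subcategoryAcyclic C
  refine ⟨P.prop_zero, P.prop_of_iso, fun n X h => P.le_shift n X h,
    fun T hT h₁ h₂ => P.ext_of_isTriangulatedClosed₃ T hT h₁ h₂, fun X c hc hX => ?_⟩
  choose K hK using fun j => HomotopyCategory.quotient_obj_surjective (X j)
  obtain rfl : (fun j => (HomotopyCategory.quotient C _).obj (K j)) = X := funext hK
  have h_exact := (HomotopyCategory.quotient_obj_mem_subcategoryAcyclic_iff_exactAt _).2 fun n =>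
    exactAt_of_isColimit_cofan (coproductIsCoproduct K) fun j =>
      (HomotopyCategory.quotient_obj_mem_subcategoryAcyclic_iff_exactAt _).1 (hX j) n
  exact P.prop_of_iso (((isColimitMapCoconeCofanMkEquiv _ _ _ (isColimitOfPreserves
    (HomotopyCategory.quotient C _) (coproductIsCoproduct K)))).coconePointUniqueUpToIso hc) h_exact

variable (J : Type w)

instance : HasCoproductsOfShape J (HomotopyCategory C (ComplexShape.up ℤ)) :=
  hasCoproductsOfShape_of_essSurj (HomotopyCategory.quotient C _)

instance isStableUnderCoproductsOfShape_quasiIso :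
    (HomotopyCategory.quasiIso C (ComplexShape.up ℤ)).IsStableUnderCoproductsOfShape J := by
  rw [HomotopyCategory.quasiIso_eq_trW_subcategoryAcyclic]
  refine .mk _ J fun X Y _ _ f hf => ?_
  exact (isLocalizingSub_acyclic C).trW_of_isColimit (coproductIsCoproduct X)
    (coproductIsCoproduct Y) (Limits.Sigma.ι_map f) hf

variable [HasDerivedCategory.{w'} C]

instance preservesCoproductsOfShape_derivedCategory_Qh :
    PreservesColimitsOfShape (Discrete J) (DerivedCategory.Qh (C := C)) :=
  preservesCoproductsOfShape_of_isLocalization _ (HomotopyCategory.quasiIso C _)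

instance preservesCoproductsOfShape_derivedCategory_Q :
    PreservesColimitsOfShape (Discrete J) (DerivedCategory.Q (C := C)) :=
  preservesColimitsOfShape_of_natIso (DerivedCategory.quotientCompQhIso C)

instance hasCoproductsOfShape_derivedCategory : HasCoproductsOfShape J (DerivedCategory C) :=
  hasCoproductsOfShape_of_essSurj DerivedCategory.Q

end DerivedCategoryCoproducts

section CompactTransfer

variable {C D : Type*} [Category* C] [Category* D] [Preadditive C] [Preadditive D]

theorem IsCompactObj.obj_of_map_surjective (F : C ⥤ D) [F.Additive] [F.EssSurj]
    [HasCoproducts.{w} C] [∀ J : Type w, PreservesColimitsOfShape (Discrete J) F] {x : C}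
    (hx : IsCompactObj.{w} x) (h_full : ∀ Y, Function.Surjective (F.map : (x ⟶ Y) → _)) :
    IsCompactObj.{w} (F.obj x) := by
  refine isCompactObj_iff_exists_eq_sum.2 fun J f c hc h => ?_
  let K j := F.objPreimage (f j)
  let e j : F.obj (K j) ≅ f j := F.objObjPreimageIso (f j)
  let hc' := isColimitMapCoconeCofanMkEquiv _ _ _
    (isColimitOfPreserves F (coproductIsCoproduct K))
  let a : F.obj (∐ K) ⟶ c.pt := Cofan.IsColimit.desc hc' fun j => (e j).hom ≫ c.inj j
  let b : c.pt ⟶ F.obj (∐ K) :=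
    Cofan.IsColimit.desc hc fun j => (e j).inv ≫ F.map (Limits.Sigma.ι K j)
  have ι_comp_a (j) : F.map (Limits.Sigma.ι K j) ≫ a = (e j).hom ≫ c.inj j :=
    Cofan.IsColimit.fac hc' _ j
  have b_comp_a : b ≫ a = 𝟙 _ := Cofan.IsColimit.hom_ext hc _ _ fun j => by
    simp [b, Cofan.IsColimit.fac_assoc, ι_comp_a]
  obtain ⟨k, hk⟩ := h_full _ (h ≫ b)
  obtain ⟨s, g, hg⟩ := isCompactObj_iff_exists_eq_sum.1 hx _ _ (coproductIsCoproduct K) k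
  refine ⟨s, fun j => F.map (g j) ≫ (e j).hom, ?_⟩
  calc h = F.map k ≫ a := by rw [hk, Category.assoc, b_comp_a, Category.comp_id]
    _ = ∑ j ∈ s, F.map (g j) ≫ F.map (Limits.Sigma.ι K j) ≫ a := by
      rw [hg, F.map_sum, Preadditive.sum_comp]
      simp
    _ = _ := by simp [ι_comp_a]

theorem map_cofanTrunc (F : C ⥤ D) [F.Additive] {J : Type w} {f : J → C} {c : Cofan f}
    (hc : IsColimit c) (hc' : IsColimit (Cofan.mk (F.obj c.pt) fun j => F.map (c.inj j)))
    (s : Finset J) : F.map (cofanTrunc hc s) = cofanTrunc hc' s := by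
  have map_proj (i : J) : F.map (cofanProj hc i) = cofanProj hc' i :=
    Cofan.IsColimit.hom_ext hc' _ _ fun j => by
      refine (F.map_comp _ _).symm.trans ?_
      obtain rfl | hij := eq_or_ne j i
      · rw [inj_comp_cofanProj_self, inj_comp_cofanProj_self, F.map_id]
      · rw [inj_comp_cofanProj_of_ne hc hij, inj_comp_cofanProj_of_ne hc' hij, F.map_zero]
  simp [cofanTrunc, F.map_sum, map_proj]

theorem IsCompactObj.single [HasCoproducts.{w} C] [HasZeroObject C] {ι : Type*} [DecidableEq ι]
    (c : ComplexShape ι) (i : ι) {x : C} (hx : IsCompactObj.{w} x) :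
    IsCompactObj.{w} ((HomologicalComplex.single C c i).obj x) := by
  refine isCompactObj_iff_exists_comp_cofanTrunc.2 fun J f k hk h => ?_
  let hk' := isColimitMapCoconeCofanMkEquiv _ _ _
    (isColimitOfPreserves (HomologicalComplex.eval C c i)
      (hk.ofIsoColimit (Cofan.ext (c₂ := .mk k.pt k.inj) (Iso.refl _) fun _ => Category.comp_id _)))
  obtain ⟨s, hs⟩ := isCompactObj_iff_exists_comp_cofanTrunc.1 hx _ _ hk'
    ((HomologicalComplex.singleObjXSelf c i x).inv ≫ h.f i)
  refine ⟨s, HomologicalComplex.from_single_hom_ext ?_⟩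
  rw [← cancel_epi (HomologicalComplex.singleObjXSelf c i x).inv]
  exact (Category.assoc _ _ _).symm.trans ((congrArg (_ ≫ ·)
    (map_cofanTrunc (HomologicalComplex.eval C c i) hk hk' s)).trans hs)

end CompactTransfer

section ProjectiveSingle

variable {C : Type u} [Category.{v} C] [Abelian C] [HasDerivedCategory.{w'} C]

open DerivedCategory

theorem Q_map_surjective_of_isKProjective (K L : CochainComplex C ℤ) [K.IsKProjective] :
    Function.Surjective (Q.map : (K ⟶ L) → _) := fun f => by
  obtain ⟨g, hg⟩ := (CochainComplex.IsKProjective.Qh_map_bijective K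
    ((HomotopyCategory.quotient C (ComplexShape.up ℤ)).obj L)).surjective f
  obtain ⟨g, rfl⟩ := (HomotopyCategory.quotient C _).map_surjective g
  exact ⟨g, hg⟩

theorem nonempty_homotopy_of_Q_map_eq {K L : CochainComplex C ℤ} [K.IsKProjective] {f g : K ⟶ L}
    (h : Q.map f = Q.map g) : Nonempty (Homotopy f g) :=
  ⟨HomotopyCategory.homotopyOfEq _ _ ((CochainComplex.IsKProjective.Qh_map_bijective K
    ((HomotopyCategory.quotient C (ComplexShape.up ℤ)).obj L)).injective h)⟩

variable {P : C} [Projective P] {n : ℤ}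

instance isKProjective_singleFunctor_obj :
    ((CochainComplex.singleFunctor C n).obj P).IsKProjective := by
  have (m : ℤ) : Projective (((CochainComplex.singleFunctor C n).obj P).X m) := by
    obtain rfl | hm := eq_or_ne m n
    · exact Projective.of_iso (HomologicalComplex.singleObjXSelf _ _ _).symm ‹_›
    · exact (HomologicalComplex.isZero_single_obj_X _ _ _ _ hm).projective
  exact CochainComplex.isKProjective_of_projective _ n

theorem exists_comp_d_eq_of_Q_map_eq_zero {K : CochainComplex C ℤ}
    {g : (CochainComplex.singleFunctor C n).obj P ⟶ K} (h : Q.map g = 0) :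
    ∃ γ : P ⟶ K.X (n - 1),
      γ ≫ K.d (n - 1) n = (HomologicalComplex.singleObjXSelf (.up ℤ) n P).inv ≫ g.f n := by
  obtain ⟨H⟩ := nonempty_homotopy_of_Q_map_eq (h.trans (Q.map_zero _ _).symm)
  have comm : g.f n = H.hom n (n - 1) ≫ K.d (n - 1) n := by
    rw [H.comm n, dNext_eq H.hom (show (ComplexShape.up ℤ).Rel n (n + 1) from rfl),
      prevD_eq H.hom (show (ComplexShape.up ℤ).Rel (n - 1) n by simp)]
    simp
  exact ⟨(HomologicalComplex.singleObjXSelf (.up ℤ) n P).inv ≫ H.hom n (n - 1), by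
    rw [comm]; exact Category.assoc _ _ _⟩

theorem exactAt_of_forall_Q_map_eq_zero (hP : IsSeparator P) {K : CochainComplex C ℤ}
    (h : ∀ g : (CochainComplex.singleFunctor C n).obj P ⟶ K, Q.map g = 0) : K.ExactAt n := by
  suffices K.homologyπ n = 0 from
    (K.exactAt_iff_isZero_homology n).2 ((IsZero.iff_id_eq_zero _).2
      ((cancel_epi (K.homologyπ n)).1 (by simp [this])))
  refine hP _ _ fun Q' hQ' z => ?_
  obtain rfl := (ObjectProperty.singleton_iff _ _).1 hQ'
  have hz : (z ≫ K.iCycles n) ≫ K.d n (n + 1) = 0 := by simp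
  obtain ⟨γ, hγ⟩ := exists_comp_d_eq_of_Q_map_eq_zero
    (h (HomologicalComplex.mkHomFromSingle (z ≫ K.iCycles n) (by rintro _ rfl; exact hz)))
  have : z = γ ≫ K.toCycles (n - 1) n := by
    rw [← cancel_mono (K.iCycles n)]
    simpa using hγ.symm
  simp [this]

theorem hom_single_eq_zero_of_isZero_X {K : CochainComplex C ℤ} (hK : IsZero (K.X n))
    (g : Q.obj ((CochainComplex.singleFunctor C n).obj P) ⟶ Q.obj K) : g = 0 := by
  obtain ⟨g, rfl⟩ := Q_map_surjective_of_isKProjective _ _ g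
  obtain rfl : g = 0 := HomologicalComplex.from_single_hom_ext (hK.eq_of_tgt _ _)
  exact Q.map_zero _ _

variable (P) in
/-- The shift by `k` of an object placed in degree `0` is that object placed in degree `-k`, as
shifting a cochain complex by `k` moves its term of degree `k` to degree `0`. -/
noncomputable def shiftSingleIso (k : ℤ) : ((singleFunctor C 0).obj P)⟦k⟧ ≅
    Q.obj ((CochainComplex.singleFunctor C (-k)).obj P) :=
  ((singleFunctors C).shiftIso k (-k) 0 (by simp)).app P

theorem hom_shift_singleFunctor_eq_zero_of_isZero_X {K : CochainComplex C ℤ} {k : ℤ}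
    (hK : IsZero (K.X (-k))) (g : ((singleFunctor C 0).obj P)⟦k⟧ ⟶ Q.obj K) : g = 0 := by
  rw [← cancel_epi (shiftSingleIso P k).inv, comp_zero]
  exact hom_single_eq_zero_of_isZero_X hK _

theorem isZero_Q_obj_of_forall_exactAt {K : CochainComplex C ℤ} (hK : ∀ m, K.ExactAt m) :
    IsZero (Q.obj K) := by
  have : QuasiIso (0 : K ⟶ K) := (quasiIso_iff _).2 fun m =>
    (quasiIsoAt_iff_exactAt _ _ (hK m)).2 (hK m)
  have h : IsIso (Q.map (0 : K ⟶ K)) := (isIso_Q_map_iff_quasiIso _ _).2 this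
  rw [Q.map_zero] at h
  exact (IsZero.iff_id_eq_zero _).2 (isIsoZeroEquiv _ _ h).1

theorem isWeakGenerator_singleFunctor_obj (hP : IsSeparator P) :
    IsWeakGenerator ((singleFunctor C 0).obj P) := fun X h => by
  let K := Q.objPreimage X
  have exactAt (m : ℤ) : K.ExactAt m :=
    exactAt_of_forall_Q_map_eq_zero hP fun g => by
      obtain ⟨k, rfl⟩ : ∃ k, m = -k := ⟨-m, by simp⟩
      have := h k ((shiftSingleIso P k).hom ≫ Q.map g ≫ (Q.objObjPreimageIso X).hom)
      simpa using this
  exact (isZero_Q_obj_of_forall_exactAt exactAt).of_iso (Q.objObjPreimageIso X).symm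

instance small_shift_singleFunctor_hom (k : ℤ) (X : DerivedCategory C) :
    Small.{v} (((singleFunctor C 0).obj P)⟦k⟧ ⟶ X) :=
  small_of_surjective.{v} (α := (CochainComplex.singleFunctor C (-k)).obj P ⟶ Q.objPreimage X)
    (f := fun g => (shiftSingleIso P k).hom ≫ Q.map g ≫ (Q.objObjPreimageIso X).hom) fun g => by
      obtain ⟨g', hg'⟩ := Q_map_surjective_of_isKProjective _ _
        ((shiftSingleIso P k).inv ≫ g ≫ (Q.objObjPreimageIso X).inv)
      exact ⟨g', by simp [hg']⟩

theorem isCompactObj_singleFunctor_obj [HasCoproducts.{w} C] [AB4OfSize.{w} C]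
    (hP : IsCompactObj.{w} P) : IsCompactObj.{w} ((singleFunctor C 0).obj P) :=
  (hP.single (.up ℤ) 0).obj_of_map_surjective Q fun Y =>
    Q_map_surjective_of_isKProjective ((CochainComplex.singleFunctor C 0).obj P) Y

end ProjectiveSingle

section Ring

variable (R : Type u) [CommRing R]

instance projective_of_self : Projective (ModuleCat.of R R) :=
  (IsProjective.iff_projective (R := R) R).1 inferInstance

theorem isSeparator_of_self : IsSeparator (ModuleCat.of R R) := fun X Y f g h => by
  ext x
  simpa using congr($(h _ (ObjectProperty.singleton_iff _ _ |>.2 rfl)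
    (ModuleCat.ofHom (LinearMap.toSpanSingleton R X x))) (1 : R))

theorem isCompactObj_of_self : IsCompactObj.{u} (ModuleCat.of R R) := by
  refine isCompactObj_iff_exists_eq_sum.2 fun J f c hc h => ?_
  let U : Submodule R c.pt := ⨆ i, LinearMap.range (c.inj i).hom
  have mkQ_eq_zero : ModuleCat.ofHom U.mkQ = 0 := Cofan.IsColimit.hom_ext hc _ _ fun i => by
    ext y
    exact (Submodule.Quotient.mk_eq_zero U).2
      (Submodule.mem_iSup_of_mem (p := fun i => LinearMap.range (c.inj i).hom) i ⟨y, rfl⟩)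
  have hU : h (1 : R) ∈ U := by
    simpa using congr($mkQ_eq_zero (h (1 : R)))
  obtain ⟨z, hz, h_sum⟩ := (Submodule.mem_iSup_iff_exists_finsupp _ _).1 hU
  choose y hy using hz
  refine ⟨z.support, fun i => ModuleCat.ofHom (LinearMap.toSpanSingleton R _ (y i)), ?_⟩
  ext
  simp [← h_sum, Finsupp.sum, ModuleCat.hom_sum, hy]

variable [HasDerivedCategory.{w'} (ModuleCat.{u} R)]

theorem isCompactObj_smod_self : IsCompactObj.{u} (smod R (ModuleCat.of R R)) :=
  isCompactObj_singleFunctor_obj (isCompactObj_of_self R)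

theorem isWeakGenerator_smod_self : IsWeakGenerator (smod R (ModuleCat.of R R)) :=
  isWeakGenerator_singleFunctor_obj (isSeparator_of_self R)

instance small_shift_smod_self_hom (k : ℤ) (X : DerivedCategory (ModuleCat.{u} R)) :
    Small.{u} ((smod R (ModuleCat.of R R))⟦k⟧ ⟶ X) :=
  small_shift_singleFunctor_hom k X

end Ring

section DimensionShifting

theorem exists_functor_of_forall_exists_hom_shift {T : Type u} [Category.{v} T] [HasShift T ℤ]
    (W : MorphismProperty T) [W.RespectsIso] [W.IsCompatibleWithShift ℤ] {ι : Type*} {A : ι → T}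
    (h : ∀ i, ∃ (j : ι) (φ : A i ⟶ (A j)⟦(1 : ℤ)⟧), W φ) (i : ι) :
    ∃ (F : ℕ ⥤ T) (j : ℕ → ι), j 0 = i ∧ (∀ n, Nonempty (F.obj n ≅ (A (j n))⟦(n : ℤ)⟧)) ∧
      ∀ n, W (transition F n) := by
  choose next φ hφ using h
  let j (n : ℕ) : ι := Nat.rec i (fun _ => next) n
  let f (n : ℕ) : (A (j n))⟦(n : ℤ)⟧ ⟶ (A (j (n + 1)))⟦((n + 1 : ℕ) : ℤ)⟧ :=
    (φ (j n))⟦(n : ℤ)⟧' ≫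
      ((shiftFunctorAdd' T 1 (n : ℤ) ((n + 1 : ℕ) : ℤ) (by push_cast; ring)).app _).inv
  refine ⟨Functor.ofSequence f, j, rfl, fun n => ⟨Iso.refl _⟩, fun n => ?_⟩
  have : transition (Functor.ofSequence f) n = f n := Functor.ofSequence_map_homOfLE_succ f n
  exact this ▸ MorphismProperty.RespectsIso.postcomp _ _ _ (W.shift (hφ (j n)) (n : ℤ))

variable {T : Type u} [Category.{v} T] [Preadditive T] [HasZeroObject T]
  [HasShift T ℤ] [∀ n : ℤ, (shiftFunctor T n).Additive] [Pretriangulated T]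

omit [HasZeroObject T] [Pretriangulated T] in
theorem eq_zero_of_forall_hom_shift_eq_zero {G X : T} {k n : ℤ}
    (h : ∀ g : G⟦k - n⟧ ⟶ X, g = 0) (g : G⟦k⟧ ⟶ X⟦n⟧) : g = 0 := by
  let e := (shiftFunctorAdd' T (k - n) n k (by simp)).app G
  obtain ⟨g', hg'⟩ := (shiftFunctor T n).map_surjective (e.inv ≫ g)
  rw [← cancel_epi e.inv, ← hg', h g', Functor.map_zero, comp_zero]

variable [IsTriangulated T] [HasCoproducts.{w} T]

theorem IsLocalizingSub.mem_of_forall_exists_trW_shift {L : Set T} (hL : IsLocalizingSub.{w} L)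
    {G : T} (hG : IsCompactObj.{w} G) (hG' : IsWeakGenerator G) {ι : Type*} {A : ι → T}
    (h : ∀ i, ∃ (j : ι) (φ : A i ⟶ (A j)⟦(1 : ℤ)⟧), ObjectProperty.trW (· ∈ L) φ) {b : ℤ}
    (hA : ∀ i, ∀ k < b, ∀ g : G⟦k⟧ ⟶ A i, g = 0) (i : ι) : A i ∈ L := by
  have := hL.isClosedUnderIsomorphisms
  have := hL.isTriangulated
  obtain ⟨F, j, rfl, hFA, hFL⟩ :=
    exists_functor_of_forall_exists_hom_shift (ObjectProperty.trW (· ∈ L)) h i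
  have eventuallyGhost : IsEventuallyGhost G F := fun k n g => by
    let m : ℕ := n + (k - b + 1).toNat
    obtain ⟨e⟩ := hFA m
    refine ⟨m, Nat.le_add_right _ _, ?_⟩
    rw [← cancel_mono e.hom, zero_comp]
    exact eq_zero_of_forall_hom_shift_eq_zero (hA (j m) (k - m) (by lia)) _
  exact hL.mem_of_iso ((hFA 0).some ≪≫ (shiftFunctorZero T ℤ).app _)
    (eventuallyGhost.mem_of_forall_trW hG hG' hL hFL)

end DimensionShifting

section CyclicGeneration

variable {R : Type u} [CommRing R]

theorem le_annihilator_sigma {J : Ideal R} {ι : Type u} {M : ι → ModuleCat.{u} R}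
    (hM : ∀ i, J ≤ Module.annihilator R (M i)) : J ≤ Module.annihilator R ↑(∐ M) := fun r hr => by
  have : r • 𝟙 (∐ M) = 0 := Limits.Sigma.hom_ext _ _ fun i => by
    rw [Linear.comp_smul, Category.comp_id, comp_zero]
    ext x
    exact (map_smul (Limits.Sigma.ι M i).hom r x).symm.trans
      (by rw [Module.mem_annihilator.1 (hM i hr) x, map_zero]; rfl)
  exact Module.mem_annihilator.2 fun x => congr($this x)

theorem exists_shortExact_sigma_quotient {J : Ideal R} {N : ModuleCat.{u} R}
    (hN : J ≤ Module.annihilator R N) :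
    ∃ (N' : ModuleCat.{u} R) (i : N' ⟶ ∐ fun _ : N => ModuleCat.of R (R ⧸ J))
      (p : (∐ fun _ : N => ModuleCat.of R (R ⧸ J)) ⟶ N) (w : i ≫ p = 0),
      (ShortComplex.mk i p w).ShortExact ∧ J ≤ Module.annihilator R N' := by
  let q (x : N) : ModuleCat.of R (R ⧸ J) ⟶ N :=
    ModuleCat.ofHom (Submodule.liftQ J (LinearMap.toSpanSingleton R N x) fun r hr =>
      Module.mem_annihilator.1 (hN hr) x)
  let p : (∐ fun _ : N => ModuleCat.of R (R ⧸ J)) ⟶ N := Limits.Sigma.desc q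
  have : Epi p := (ModuleCat.epi_iff_surjective _).2 fun x => by
    refine ⟨Limits.Sigma.ι (fun _ : N => ModuleCat.of R (R ⧸ J)) x (Submodule.Quotient.mk 1), ?_⟩
    exact congr($(Limits.Sigma.ι_desc q x) (Submodule.Quotient.mk 1)).trans (one_smul R x)
  refine ⟨kernel p, kernel.ι p, p, kernel.condition p, { exact := ShortComplex.exact_kernel p }, ?_⟩
  calc J ≤ Module.annihilator R ↑(∐ fun _ : N => ModuleCat.of R (R ⧸ J)) :=
        le_annihilator_sigma fun _ => Ideal.annihilator_quotient.ge
    _ ≤ Module.annihilator R ↑(kernel p) := LinearMap.annihilator_le_of_injective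
        (kernel.ι p).hom ((ModuleCat.mono_iff_injective _).1 inferInstance)

end CyclicGeneration

section ExactFunctor

open DerivedCategory

variable {R : Type u} [CommRing R] [HasDerivedCategory.{w'} (ModuleCat.{u} R)]
  {L : Set (DerivedCategory (ModuleCat.{u} R))} (hL : IsLocalizingSub.{u} L)

include hL

theorem Q_obj_mem_of_le_annihilator
    {Φ : ModuleCat.{u} R ⥤ CochainComplex (ModuleCat.{u} R) ℤ} [Φ.Additive]
    [PreservesFiniteLimits Φ] [PreservesFiniteColimits Φ]
    [∀ ι : Type u, PreservesColimitsOfShape (Discrete ι) Φ] {b : ℤ}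
    (hΦ : ∀ M m, b < m → IsZero ((Φ.obj M).X m)) {J : Ideal R}
    (hJ : Q.obj (Φ.obj (ModuleCat.of R (R ⧸ J))) ∈ L) {N : ModuleCat.{u} R}
    (hN : J ≤ Module.annihilator R N) : Q.obj (Φ.obj N) ∈ L := by
  have := hL.isClosedUnderIsomorphisms
  refine hL.mem_of_forall_exists_trW_shift (isCompactObj_smod_self R)
    (isWeakGenerator_smod_self R) (b := -b)
    (A := fun N : {N : ModuleCat.{u} R // J ≤ Module.annihilator R N} => Q.obj (Φ.obj N))
    (fun ⟨N, hN⟩ => ?_) (fun N k hk g => ?_) ⟨N, hN⟩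
  · obtain ⟨N', i, p, w, hS, hN'⟩ := exists_shortExact_sigma_quotient hN
    let hc := isColimitMapCoconeCofanMkEquiv _ _ _ (isColimitOfPreserves (Φ ⋙ Q)
      (coproductIsCoproduct fun _ : N => ModuleCat.of R (R ⧸ J)))
    refine ⟨⟨N', hN'⟩, triangleOfSESδ (hS.map_of_exact Φ), ?_⟩
    exact (hL.trW_iff_obj₃_mem (rot_of_distTriang _ (rot_of_distTriang _
      (triangleOfSES_distinguished (hS.map_of_exact Φ))))).2
        (hL.shift_mem 1 (hL.coprod_mem _ _ hc fun _ => hJ))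
  · exact hom_shift_singleFunctor_eq_zero_of_isZero_X (hΦ N (-k) (by lia)) g

theorem smod_mem_of_le_annihilator {J : Ideal R} (hJ : smod R (ModuleCat.of R (R ⧸ J)) ∈ L)
    {N : ModuleCat.{u} R} (hN : J ≤ Module.annihilator R N) : smod R N ∈ L :=
  Q_obj_mem_of_le_annihilator hL (Φ := HomologicalComplex.single (ModuleCat.{u} R) (.up ℤ) 0)
    (fun _ _ hm => HomologicalComplex.isZero_single_obj_X _ _ _ _ hm.ne') hJ hN

end ExactFunctor

section Koszul

open DerivedCategory

theorem IsLocalizingSub.trW_singleFunctor_map {C : Type u} [Category.{v} C] [Abelian C]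
    [HasDerivedCategory.{w'} C] {L : Set (DerivedCategory C)} (hL : IsLocalizingSub.{w} L)
    {M N : C} (φ : M ⟶ N) (h_ker : (singleFunctor C 0).obj (kernel φ) ∈ L)
    (h_coker : (singleFunctor C 0).obj (cokernel φ) ∈ L) :
    ObjectProperty.trW (· ∈ L) ((singleFunctor C 0).map φ) := by
  have := hL.isClosedUnderIsomorphisms
  have := hL.isTriangulated
  have h_coimage : (ShortComplex.mk (kernel.ι φ) (Abelian.coimage.π φ)
      (cokernel.condition _)).ShortExact :=
    { exact := ShortComplex.exact_cokernel _ }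
  have h_image : (ShortComplex.mk (Abelian.image.ι φ) (cokernel.π φ)
      (kernel.condition _)).ShortExact :=
    { exact := ShortComplex.exact_kernel _ }
  rw [← Abelian.coimage_image_factorisation φ, Functor.map_comp, Functor.map_comp]
  refine MorphismProperty.comp_mem _ _ _ ?_ (MorphismProperty.comp_mem _ _ _ ?_ ?_)
  · exact (hL.trW_iff_obj₃_mem (rot_of_distTriang _
      h_coimage.singleTriangle_distinguished)).2 (hL.shift_mem 1 h_ker)
  · exact ObjectProperty.trW_of_isIso _ _
  · exact (hL.trW_iff_obj₃_mem h_image.singleTriangle_distinguished).2 h_coker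

variable (R : Type u) [CommRing R] [HasDerivedCategory.{w'} (ModuleCat.{u} R)]

theorem singleFunctor_map_smul_id (M : ModuleCat.{u} R) (f : R) :
    (singleFunctor (ModuleCat.{u} R) 0).map (f • 𝟙 M) = f • 𝟙 (smod R M) := by
  rw [Functor.map_smul, CategoryTheory.Functor.map_id]
  rfl

variable {R}

omit [HasDerivedCategory (ModuleCat R)] in
theorem mem_annihilator_iff_smul_id_eq_zero {M : ModuleCat.{u} R} {r : R} :
    r ∈ Module.annihilator R M ↔ r • 𝟙 M = 0 := by
  refine Module.mem_annihilator.trans ⟨fun h => ?_, fun h x => congr($h x)⟩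
  ext x
  exact h x

variable {L : Set (DerivedCategory (ModuleCat.{u} R))}

theorem IsLocalizingSub.trW_smul_id_smod (hL : IsLocalizingSub.{u} L) {J : Ideal R} {f : R}
    (hJ : smod R (ModuleCat.of R (R ⧸ J ⊔ Ideal.span {f})) ∈ L) {M : ModuleCat.{u} R}
    (hM : J ≤ Module.annihilator R M) : ObjectProperty.trW (· ∈ L) (f • 𝟙 (smod R M)) := by
  rw [← singleFunctor_map_smul_id]
  refine hL.trW_singleFunctor_map _ (smod_mem_of_le_annihilator hL hJ ?_)
    (smod_mem_of_le_annihilator hL hJ ?_)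
  · refine sup_le (hM.trans (LinearMap.annihilator_le_of_injective (kernel.ι (f • 𝟙 M)).hom
      ((ModuleCat.mono_iff_injective _).1 inferInstance))) ?_
    rw [Ideal.span_singleton_le_iff_mem, mem_annihilator_iff_smul_id_eq_zero,
      ← cancel_mono (kernel.ι (f • 𝟙 M)), zero_comp, ← kernel.condition (f • 𝟙 M),
      Linear.smul_comp, Linear.comp_smul, Category.id_comp, Category.comp_id]
  · refine sup_le (hM.trans (LinearMap.annihilator_le_of_surjective (cokernel.π (f • 𝟙 M)).hom
      ((ModuleCat.epi_iff_surjective _).1 inferInstance))) ?_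
    rw [Ideal.span_singleton_le_iff_mem, mem_annihilator_iff_smul_id_eq_zero,
      ← cancel_epi (cokernel.π (f • 𝟙 M)), comp_zero, ← cokernel.condition (f • 𝟙 M),
      Linear.smul_comp, Linear.comp_smul, Category.id_comp, Category.comp_id]

theorem smod_self_mem_loc_quotient_bot : smod R (ModuleCat.of R R) ∈ locQuot R (⊥ : Ideal R) :=
  smod_mem_of_le_annihilator (isLocalizingSub_loc _) (mem_loc_self _) bot_le

theorem cone_smul_id_mem_locQuot {J : Ideal R} {f : R} {C E : DerivedCategory (ModuleCat.{u} R)}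
    {p : C ⟶ E} {q : E ⟶ C⟦(1 : ℤ)⟧} (hT : Triangle.mk (f • 𝟙 C) p q ∈ distinguishedTriangles)
    (hC : C ∈ locQuot R J) : E ∈ locQuot R (J ⊔ Ideal.span {f}) := by
  have hL := isLocalizingSub_loc.{u} {smod R (ModuleCat.of R (R ⧸ J ⊔ Ideal.span {f}))}
  refine (hL.trW_iff_obj₃_mem hT).1 ((loc_singleton_subset_iff (hL.setOf_trW_smul_id f)).2 ?_ hC)
  exact hL.trW_smul_id_smod (mem_loc_self _) Ideal.annihilator_quotient.ge

theorem exists_isCompactObj_forall_mem_loc {I : Ideal R} (hI : I.FG) :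
    ∃ C : DerivedCategory (ModuleCat.{u} R), IsCompactObj.{u} C ∧ C ∈ locQuot R I ∧
      ∀ X : DerivedCategory (ModuleCat.{u} R),
        (∀ f ∈ I, ∃ n : ℕ, f ^ n • 𝟙 X = 0) → X ∈ Loc.{u} {C} := by
  classical
  obtain ⟨s, rfl⟩ := hI
  induction s using Finset.induction with
  | empty =>
    rw [Finset.coe_empty, Ideal.span_empty]
    exact ⟨_, isCompactObj_smod_self R, smod_self_mem_loc_quotient_bot, fun X _ =>
      (isWeakGenerator_smod_self R).mem_isLocalizingSub (isCompactObj_smod_self R)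
        (isLocalizingSub_loc _) (mem_loc_self _) X⟩
  | insert f s _ ih =>
    obtain ⟨C, hC, hCs, hX⟩ := ih
    obtain ⟨E, p, q, hT⟩ := distinguished_cocone_triangle (f • 𝟙 C)
    rw [Finset.coe_insert, Ideal.span_insert, sup_comm]
    refine ⟨E, hC.obj₃ hT hC, cone_smul_id_mem_locQuot hT hCs, fun X hfX => ?_⟩
    obtain ⟨n, hn⟩ := hfX f (Ideal.mem_sup_right (Ideal.mem_span_singleton_self f))
    exact mem_loc_of_smul_pow_eq_zero hT (hX X fun g hg => hfX g (Ideal.mem_sup_left hg)) hn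

theorem smul_id_smod_quotient_eq_zero {I : Ideal R} {f : R} (hf : f ∈ I) :
    f • 𝟙 (smod R (ModuleCat.of R (R ⧸ I))) = 0 := by
  have : f • 𝟙 (ModuleCat.of R (R ⧸ I)) = 0 := mem_annihilator_iff_smul_id_eq_zero.1
    (Ideal.annihilator_quotient.ge hf)
  rw [← singleFunctor_map_smul_id, this, Functor.map_zero]
  rfl

theorem exists_isCompactObj_locQuot_eq {I : Ideal R} (hI : I.FG) :
    ∃ C : DerivedCategory (ModuleCat.{u} R), IsCompactObj.{u} C ∧ locQuot R I = Loc.{u} {C} := by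
  obtain ⟨C, hC, hCI, hX⟩ := exists_isCompactObj_forall_mem_loc hI
  refine ⟨C, hC, subset_antisymm ?_ ?_⟩
  · refine (loc_singleton_subset_iff (isLocalizingSub_loc _)).2 (hX _ fun f hf => ⟨1, ?_⟩)
    rw [pow_one, smul_id_smod_quotient_eq_zero hf]
  · exact (loc_singleton_subset_iff (isLocalizingSub_loc _)).2 hCI

theorem mem_locQuot_of_forall_exists_pow {I : Ideal R} (hI : I.FG)
    {X : DerivedCategory (ModuleCat.{u} R)} (hX : ∀ f ∈ I, ∃ n : ℕ, f ^ n • 𝟙 X = 0) :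
    X ∈ locQuot R I := by
  obtain ⟨C, -, hCI, h⟩ := exists_isCompactObj_forall_mem_loc hI
  exact (loc_singleton_subset_iff (isLocalizingSub_loc _)).2 hCI (h X hX)

end Koszul

section LeftOrthogonal

variable {T : Type u} [Category.{v} T] [Preadditive T] [HasZeroObject T]
  [HasShift T ℤ] [∀ n : ℤ, (shiftFunctor T n).Additive] [Pretriangulated T]

theorem isLocalizingSub_leftOrthogonal (P : ObjectProperty T) [P.IsStableUnderShift ℤ] :
    IsLocalizingSub.{w} {X : T | P.leftOrthogonal X} where
  zero_mem := fun _ g _ => (isZero_zero T).eq_of_src g 0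
  mem_of_iso := fun e hX => P.leftOrthogonal.prop_of_iso e hX
  shift_mem := fun n _ hX => P.leftOrthogonal.le_shift n _ hX
  cone_mem := fun Tr hTr h₁ h₂ =>
    ObjectProperty.ext_of_isTriangulatedClosed₃ P.leftOrthogonal Tr hTr h₁ h₂
  coprod_mem := fun _ c hc hX _ g hY => hc.hom_ext fun ⟨i⟩ =>
    (hX i (c.inj i ≫ g) hY).trans comp_zero.symm

theorem eq_zero_of_mem_loc_of_isIso_smul_id {R : Type*} [CommRing R] [Linear R T]
    [∀ n : ℤ, (shiftFunctor T n).Linear R] {X Y Z : T} (hX : X ∈ Loc.{w} {Z}) {f : R}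
    (hZ : f • 𝟙 Z = 0) [hY : IsIso (f • 𝟙 Y)] (g : X ⟶ Y) : g = 0 := by
  let P : ObjectProperty T := fun W => IsIso (f • 𝟙 W)
  have : P.IsStableUnderShift ℤ := ⟨fun n => ⟨fun W (_ : IsIso (f • 𝟙 W)) => by
    have : (shiftFunctor T n).map (f • 𝟙 W) = f • 𝟙 (W⟦n⟧) := by
      rw [Functor.map_smul, CategoryTheory.Functor.map_id]
    change IsIso (f • 𝟙 (W⟦n⟧))
    rw [← this]
    infer_instance⟩⟩
  refine (loc_singleton_subset_iff (isLocalizingSub_leftOrthogonal P)).2 ?_ hX g hY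
  intro W h (hW : IsIso (f • 𝟙 W))
  have : h ≫ (f • 𝟙 W) = (f • 𝟙 Z) ≫ h := by simp
  rw [← cancel_mono (f • 𝟙 W), this, hZ, zero_comp, zero_comp]

end LeftOrthogonal

section RadicalComparison

open DerivedCategory

variable {R : Type u} [CommRing R] [HasDerivedCategory.{w'} (ModuleCat.{u} R)]

theorem isIso_smul_id_smod_of_isUnit (M : Type u) [CommRing M] [Algebra R M] {f : R}
    (hf : IsUnit (algebraMap R M f)) : IsIso (f • 𝟙 (smod R (ModuleCat.of R M))) := by
  have : IsIso (f • 𝟙 (ModuleCat.of R M)) := by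
    refine (ConcreteCategory.isIso_iff_bijective _).2 ?_
    convert IsUnit.isUnit_iff_mulLeft_bijective.1 hf using 1
    ext x
    exact Algebra.smul_def f x
  rw [← singleFunctor_map_smul_id]
  exact Functor.map_isIso _ _

theorem mem_radical_of_locQuot_subset {I J : Ideal R} (h : locQuot R J ⊆ locQuot R I) {f : R}
    (hf : f ∈ I) : f ∈ J.radical := by
  let A := Localization.Away (algebraMap R (R ⧸ J) f)
  have := isIso_smul_id_smod_of_isUnit A (f := f) (by
    rw [IsScalarTower.algebraMap_apply R (R ⧸ J) A]
    exact IsLocalization.Away.algebraMap_isUnit _)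
  let φ : ModuleCat.of R (R ⧸ J) ⟶ ModuleCat.of R A :=
    ModuleCat.ofHom (IsScalarTower.toAlgHom R (R ⧸ J) A).toLinearMap
  have φ_eq_zero : φ = 0 := (singleFunctor (ModuleCat.{u} R) 0).map_injective
    ((eq_zero_of_mem_loc_of_isIso_smul_id (h (mem_loc_self _)) (smul_id_smod_quotient_eq_zero hf)
      (hY := this) _).trans (Functor.map_zero _ _ _).symm)
  have one_eq_zero : (1 : A) = 0 := (map_one (algebraMap (R ⧸ J) A)).symm.trans congr($φ_eq_zero 1)
  have := subsingleton_of_zero_eq_one one_eq_zero.symm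
  obtain ⟨n, hn⟩ := (IsLocalization.subsingleton_iff (S := A)
    (M := .powers (algebraMap R (R ⧸ J) f))).1 inferInstance
  exact ⟨n, Ideal.Quotient.eq_zero_iff_mem.1 ((map_pow _ f n).trans hn)⟩

variable (R) in
theorem radical_le_radical_iff_locQuot_subset {I J : Ideal R} (hI : I.FG) :
    I.radical ≤ J.radical ↔ locQuot R J ⊆ locQuot R I := by
  refine ⟨fun h => (loc_singleton_subset_iff (isLocalizingSub_loc _)).2
    (mem_locQuot_of_forall_exists_pow hI fun f hf => ?_), fun h =>
    Ideal.radical_le_radical_iff.2 fun f hf => mem_radical_of_locQuot_subset h hf⟩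
  obtain ⟨n, hn⟩ := h (Ideal.le_radical hf)
  exact ⟨n, smul_id_smod_quotient_eq_zero hn⟩

end RadicalComparison

section BoundedComplexes

variable {C : Type u} [Category.{v} C] [Abelian C] (P : ObjectProperty C)

/-- The bounded complexes whose terms satisfy `P`. With `P` the finitely generated projective
modules, these are the strictly perfect complexes. -/
def boundedComplexes : ObjectProperty (CochainComplex C ℤ) := fun K =>
  (∀ i, P (K.X i)) ∧ ∃ a b : ℤ, ∀ i ∉ Set.Icc a b, IsZero (K.X i)

variable {P}

theorem boundedComplexes.isKProjective (hP : P ≤ fun X => Projective X) {K : CochainComplex C ℤ}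
    (hK : boundedComplexes P K) : K.IsKProjective := by
  obtain ⟨hK, a, b, hab⟩ := hK
  have : K.IsStrictlyLE b :=
    (CochainComplex.isStrictlyLE_iff _ _).2 fun i hi => hab i fun h => by grind
  have := fun i => hP _ (hK i)
  exact CochainComplex.isKProjective_of_projective _ b

theorem boundedComplexes.shift {K : CochainComplex C ℤ} (hK : boundedComplexes P K) (n : ℤ) :
    boundedComplexes P (K⟦n⟧) := by
  obtain ⟨hK, a, b, hab⟩ := hK
  refine ⟨fun i => hK (i + n), a - n, b - n, fun i hi => hab (i + n) fun h => hi ?_⟩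
  rw [Set.mem_Icc] at h ⊢
  lia

theorem boundedComplexes.mappingCone [P.IsClosedUnderIsomorphisms]
    [P.IsClosedUnderBinaryProducts] {K L : CochainComplex C ℤ} (hK : boundedComplexes P K)
    (hL : boundedComplexes P L) (f : K ⟶ L) :
    boundedComplexes P (CochainComplex.mappingCone f) := by
  obtain ⟨hK, a, b, hab⟩ := hK
  obtain ⟨hL, a', b', hab'⟩ := hL
  have e := fun i => HomologicalComplex.homotopyCofiber.XIsoBiprod f i (i + 1) rfl
  refine ⟨fun i => P.prop_of_iso (e i ≪≫ biprod.isoProd _ _).symm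
      (P.prop_prod _ _ (hK (i + 1)) (hL i)), min (a - 1) a', max b b', fun i hi => .of_iso ?_ (e i)⟩
  rw [Set.mem_Icc] at hi
  exact (biprod_isZero_iff _ _).2 ⟨hab _ fun h => hi (by rw [Set.mem_Icc] at h; lia),
    hab' _ fun h => hi (by rw [Set.mem_Icc] at h; lia)⟩

theorem boundedComplexes_single [P.ContainsZero] [P.IsClosedUnderIsomorphisms] {X : C} (hX : P X)
    (n : ℤ) : boundedComplexes P ((HomologicalComplex.single C (.up ℤ) n).obj X) := by
  refine ⟨fun i => ?_, n, n, fun i hi => HomologicalComplex.isZero_single_obj_X _ _ _ _ (by grind)⟩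
  obtain rfl | hi := eq_or_ne i n
  · exact P.prop_of_iso (HomologicalComplex.singleObjXSelf _ _ _).symm hX
  · exact P.prop_of_isZero (HomologicalComplex.isZero_single_obj_X _ _ _ _ hi)

/-- The image in the derived category of the bounded complexes of projective objects satisfying `P`
is stable under cones, because such complexes are K-projective and hence every morphism between
them comes from a morphism of complexes. -/
theorem isTriangulated_map_boundedComplexes [HasDerivedCategory.{w} C] [P.ContainsZero]
    [P.IsClosedUnderIsomorphisms] [P.IsClosedUnderBinaryProducts]
    (hP : P ≤ fun X => Projective X) :
    ((boundedComplexes P).map (DerivedCategory.Q (C := C))).IsTriangulated := by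
  have : ((boundedComplexes P).map (DerivedCategory.Q (C := C))).IsStableUnderShift ℤ := by
    refine ⟨fun n => ⟨fun X hX => ?_⟩⟩
    obtain ⟨K, hK, ⟨e⟩⟩ := ObjectProperty.prop_map_iff _ _ _ |>.1 hX
    exact (ObjectProperty.prop_map_iff _ _ _).2 ⟨K⟦n⟧, hK.shift n,
      ⟨(DerivedCategory.Q.commShiftIso n).app K ≪≫ (shiftFunctor _ n).mapIso e⟩⟩
  have : ((boundedComplexes P).map (DerivedCategory.Q (C := C))).IsTriangulatedClosed₃ :=
    .mk' fun Tr hTr h₁ h₂ => by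
      obtain ⟨K, hK, ⟨e⟩⟩ := (ObjectProperty.prop_map_iff _ _ _).1 h₁
      obtain ⟨L, hL, ⟨e'⟩⟩ := (ObjectProperty.prop_map_iff _ _ _).1 h₂
      have := hK.isKProjective hP
      obtain ⟨f, hf⟩ := Q_map_surjective_of_isKProjective K L (e.hom ≫ Tr.mor₁ ≫ e'.inv)
      have comm : DerivedCategory.Q.map f ≫ e'.hom = e.hom ≫ Tr.mor₁ := by rw [hf]; simp
      exact (ObjectProperty.prop_map_iff _ _ _).2 ⟨_, hK.mappingCone hL f,
        ⟨Triangle.π₃.mapIso (isoTriangleOfIso₁₂ _ Tr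
          (DerivedCategory.mappingCone_triangle_distinguished f) hTr e e' comm)⟩⟩
  obtain ⟨Z, hZ, hPZ⟩ := P.exists_prop_of_containsZero
  exact
    { exists_zero := ⟨_, Functor.map_isZero _ (Functor.map_isZero _ hZ),
        ObjectProperty.prop_map_obj _ _ (boundedComplexes_single hPZ 0)⟩
      toIsTriangulatedClosed₂ := .of_isTriangulatedClosed₃ }

end BoundedComplexes

section StrictlyPerfect

variable (R : Type u) [CommRing R]

/-- The finitely generated projective `R`-modules, the terms of strictly perfect complexes. -/
def finiteProjective : ObjectProperty (ModuleCat.{u} R) := fun M =>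
  Module.Finite R M ∧ Module.Projective R M

instance : (finiteProjective R).IsClosedUnderIsomorphisms where
  of_iso e h :=
    have := h.1
    have := h.2
    ⟨.equiv e.toLinearEquiv, .of_equiv e.toLinearEquiv⟩

instance : (finiteProjective R).ContainsZero where
  exists_zero := ⟨.of R PUnit, ModuleCat.isZero_of_subsingleton _, inferInstanceAs <|
    Module.Finite R PUnit.{u + 1}, inferInstanceAs <| Module.Projective R PUnit.{u + 1}⟩

instance : (finiteProjective R).IsClosedUnderBinaryProducts :=
  .mk' <| by
    rintro _ ⟨F, hF⟩
    have := fun j => (hF j).1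
    have := fun j => (hF j).2
    have e : limit F ≅ ModuleCat.of R (F.obj ⟨.left⟩ × F.obj ⟨.right⟩) :=
      lim.mapIso (diagramIsoPair F) ≪≫ (biprod.isoProd _ _).symm ≪≫ ModuleCat.biprodIsoProd _ _
    exact (finiteProjective R).prop_of_iso e.symm
      ⟨inferInstanceAs <| Module.Finite R (F.obj ⟨.left⟩ × F.obj ⟨.right⟩),
        inferInstanceAs <| Module.Projective R (F.obj ⟨.left⟩ × F.obj ⟨.right⟩)⟩

theorem exists_boundedComplexes_loc_eq_of_isCompactObj
    [HasDerivedCategory.{w'} (ModuleCat.{u} R)] {C : DerivedCategory (ModuleCat.{u} R)}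
    (hC : IsCompactObj.{u} C) :
    ∃ K, boundedComplexes (finiteProjective R) K ∧
      Loc.{u} {DerivedCategory.Q.obj K} = Loc.{u} {C} := by
  have := isTriangulated_map_boundedComplexes (P := finiteProjective R) fun _ h =>
    (IsProjective.iff_projective _).1 h.2
  have : ObjectProperty.IsClosedUnderIsomorphisms
      (C := DerivedCategory (ModuleCat.{u} R)) IsCompactObj.{u} := ⟨fun e h => h.of_iso e⟩
  have hR : finiteProjective R (ModuleCat.of R R) :=
    ⟨inferInstanceAs <| Module.Finite R R, inferInstanceAs <| Module.Projective R R⟩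
  obtain ⟨E, ⟨-, hE⟩, hEC⟩ := exists_loc_eq_of_isCompactObj
    (P := (IsCompactObj.{u} : ObjectProperty _) ⊓
      (boundedComplexes (finiteProjective R)).map DerivedCategory.Q) (fun _ h => h.1)
    (G := smod R (ModuleCat.of R R))
    ⟨isCompactObj_smod_self R, ObjectProperty.prop_map_obj _ _ (boundedComplexes_single hR 0)⟩
    (isWeakGenerator_smod_self R) hC
  obtain ⟨K, hK, ⟨e⟩⟩ := (ObjectProperty.prop_map_iff _ _ _).1 hE
  exact ⟨K, hK, (loc_singleton_eq_of_iso e).trans hEC⟩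

end StrictlyPerfect

section TensorComplex

open MonoidalCategory

variable {R : Type u} [CommRing R] (K : CochainComplex (ModuleCat.{u} R) ℤ)

/-- The functor sending a module `M` to the complex `K ⊗ M`. The maps `M ⟶ K ⊗ M ⟶ M` that detect
the support of `K` go through it. -/
noncomputable def tensorComplex : ModuleCat.{u} R ⥤ CochainComplex (ModuleCat.{u} R) ℤ where
  obj M := ((tensorRight M).mapHomologicalComplex (.up ℤ)).obj K
  map φ := (NatTrans.mapHomologicalComplex ((tensoringRight _).map φ) (.up ℤ)).app K

/-- The terms of `K ⊗ M` as functors of `M`, by which exactness and preservation of colimits by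
`K ⊗ -` are checked degreewise. -/
noncomputable def tensorComplexCompEval (i : ℤ) :
    tensorComplex K ⋙ HomologicalComplex.eval _ _ i ≅ tensorLeft (K.X i) := Iso.refl _

/-- The right unitor `K ⊗ R ≅ K`. -/
noncomputable def tensorComplexObjSelf : (tensorComplex K).obj (ModuleCat.of R R) ≅ K :=
  HomologicalComplex.Hom.isoOfComponents (fun i => ρ_ (K.X i))
    fun i j _ => (rightUnitor_naturality (K.d i j)).symm

instance : (tensorComplex K).Additive where
  map_add {M N φ ψ} := by
    ext i : 1
    exact (tensorLeft (K.X i)).map_add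

instance (ι : Type u) : PreservesColimitsOfShape (Discrete ι) (tensorComplex K) :=
  HomologicalComplex.preservesColimitsOfShape_of_eval _ fun i =>
    preservesColimitsOfShape_of_natIso (tensorComplexCompEval K i).symm

instance : PreservesFiniteColimits (tensorComplex K) where
  preservesFiniteColimits _ _ _ := HomologicalComplex.preservesColimitsOfShape_of_eval _ fun i =>
    preservesColimitsOfShape_of_natIso (tensorComplexCompEval K i).symm

instance [∀ i, Module.Flat R (K.X i)] : PreservesFiniteLimits (tensorComplex K) where
  preservesFiniteLimits _ _ _ := HomologicalComplex.preservesLimitsOfShape_of_eval _ fun i =>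
    preservesLimitsOfShape_of_natIso (tensorComplexCompEval K i).symm

theorem isZero_tensorComplex_obj_X {i : ℤ} (hi : IsZero (K.X i)) (M : ModuleCat.{u} R) :
    IsZero (((tensorComplex K).obj M).X i) :=
  (tensorRight M).map_isZero hi

variable [HasDerivedCategory.{w'} (ModuleCat.{u} R)]

theorem Q_tensorComplex_obj_mem_loc {K : CochainComplex (ModuleCat.{u} R) ℤ}
    (hK : boundedComplexes (finiteProjective R) K) (M : ModuleCat.{u} R) :
    DerivedCategory.Q.obj ((tensorComplex K).obj M) ∈ Loc.{u} {DerivedCategory.Q.obj K} := by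
  obtain ⟨hK, a, b, hab⟩ := hK
  have := fun i => (hK i).2
  refine Q_obj_mem_of_le_annihilator (isLocalizingSub_loc _) (J := ⊥) (b := b)
    (fun N m hm => isZero_tensorComplex_obj_X K (hab m fun h => by grind) N) ?_ bot_le
  have e : (tensorComplex K).obj (ModuleCat.of R (R ⧸ (⊥ : Ideal R))) ≅ K :=
    (tensorComplex K).mapIso (Submodule.quotEquivOfEqBot ⊥ rfl).toModuleIso ≪≫
      tensorComplexObjSelf K
  exact (isLocalizingSub_loc _).mem_of_iso (DerivedCategory.Q.mapIso e).symm (mem_loc_self _)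

end TensorComplex

section FieldComplexes

variable {k : Type*} [Field k]

theorem exists_comp_comp_eq_self {V W : Type*} [AddCommGroup V] [Module k V] [AddCommGroup W]
    [Module k W] (f : V →ₗ[k] W) : ∃ s : W →ₗ[k] V, f ∘ₗ s ∘ₗ f = f := by
  obtain ⟨r, hr⟩ := f.rangeRestrict.exists_rightInverse_of_surjective f.range_rangeRestrict
  obtain ⟨l, hl⟩ := f.range.subtype.exists_leftInverse_of_injective f.range.ker_subtype
  refine ⟨r ∘ₗ l, LinearMap.ext fun x => ?_⟩
  have hlx : l (f x) = f.rangeRestrict x := LinearMap.congr_fun hl (f.rangeRestrict x)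
  have hrx := congrArg Subtype.val (LinearMap.congr_fun hr (f.rangeRestrict x))
  simpa [hlx] using hrx

theorem exists_contraction_of_forall_exact {V : ℤ → Type*} [∀ i, AddCommGroup (V i)]
    [∀ i, Module k (V i)] (d : ∀ i j, V i →ₗ[k] V j)
    (hd : ∀ i j l, i + 1 = j → j + 1 = l → Function.Exact (d i j) (d j l)) :
    ∃ h : ∀ i j, V i →ₗ[k] V j, ∀ i j l, i + 1 = j → j + 1 = l → ∀ x,
      d i j (h j i x) + h l j (d j l x) = x := by
  choose s hs using fun i j => exists_comp_comp_eq_self (d i j)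
  refine ⟨fun j i => s i j ∘ₗ (LinearMap.id - s j (j + 1) ∘ₗ d j (j + 1)), ?_⟩
  rintro i _ _ rfl rfl x
  have hdd : d (i + 1 + 1) (i + 1 + 1 + 1) (d (i + 1) (i + 1 + 1) x) = 0 :=
    (hd _ _ _ rfl rfl).apply_apply_eq_zero x
  obtain ⟨y, hy⟩ := (hd i _ _ rfl rfl
    (x - s (i + 1) (i + 1 + 1) (d (i + 1) (i + 1 + 1) x))).1 <| by
      rw [map_sub, sub_eq_zero]
      exact (LinearMap.congr_fun (hs (i + 1) (i + 1 + 1)) x).symm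
  have hsy : d i (i + 1) (s i (i + 1) (d i (i + 1) y)) = d i (i + 1) y :=
    LinearMap.congr_fun (hs i (i + 1)) y
  simp only [LinearMap.comp_apply, LinearMap.sub_apply, LinearMap.id_apply, hdd, ← hy, hsy]
  rw [hy, map_zero, sub_zero, sub_add_cancel]

end FieldComplexes

section ResidueField

open TensorProduct

variable {R : Type u} [CommRing R] (p : Ideal R) [p.IsPrime]

instance : IsLocalizedModule p.primeCompl
    (IsScalarTower.toAlgHom R (R ⧸ p) p.ResidueField).toLinearMap := by
  rw [isLocalizedModule_iff_isLocalization]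
  have : Algebra.algebraMapSubmonoid (R ⧸ p) p.primeCompl = nonZeroDivisors (R ⧸ p) := by
    ext x
    obtain ⟨x, rfl⟩ := Ideal.Quotient.mk_surjective x
    rw [mem_nonZeroDivisors_iff_ne_zero]
    refine ⟨?_, fun hx => ⟨x, fun h => hx (Ideal.Quotient.eq_zero_iff_mem.2 h), rfl⟩⟩
    rintro ⟨y, hy, hxy⟩ hx
    exact hy (Ideal.Quotient.eq_zero_iff_mem.1 (hxy.trans hx))
  rw [this]
  infer_instance

theorem one_tmul_residueField_eq_zero_iff {M : Type*} [AddCommGroup M] [Module R M]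
    [Module.Flat R M] (x : M) : (1 : p.ResidueField) ⊗ₜ[R] x = 0 ↔ x ∈ p • (⊤ : Submodule R M) := by
  have h : Function.Injective
      ((IsScalarTower.toAlgHom R (R ⧸ p) p.ResidueField).toLinearMap.rTensor M) :=
    Module.Flat.rTensor_preserves_injective_linearMap _
      p.injective_algebraMap_quotient_residueField
  have e : (1 : p.ResidueField) ⊗ₜ[R] x =
    ((IsScalarTower.toAlgHom R (R ⧸ p) p.ResidueField).toLinearMap.rTensor M) (1 ⊗ₜ x) := by simp
  rw [e, map_eq_zero_iff _ h, ← (quotTensorEquivQuotSMul M p).map_eq_zero_iff,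
    quotTensorEquivQuotSMul_mk_one_tmul, Submodule.Quotient.mk_eq_zero]

theorem exists_one_tmul_residueField_eq_smul {M N : Type*} [AddCommGroup M] [Module R M]
    [Module.Finite R M] [Module.Projective R M] [AddCommGroup N] [Module R N]
    (ψ : M →ₗ[R] p.ResidueField ⊗[R] N) :
    ∃ g : M →ₗ[R] N, ∃ t ∉ p, ∀ x, 1 ⊗ₜ g x = t • ψ x := by
  have := Module.finitePresentation_of_projective R M
  obtain ⟨h, t, ht⟩ := Module.FinitePresentation.exists_lift_of_isLocalizedModule p.primeCompl
    (AlgebraTensorModule.rTensor R N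
      (IsScalarTower.toAlgHom R (R ⧸ p) p.ResidueField).toLinearMap) ψ
  obtain ⟨g, hg⟩ := Module.projective_lifting_property (TensorProduct.mk R (R ⧸ p) N 1) h
    (TensorProduct.mk_surjective _ _ _ Ideal.Quotient.mk_surjective)
  refine ⟨g, t, t.2, fun x => ?_⟩
  rw [← LinearMap.smul_apply, show (t : R) • ψ = t • ψ from rfl, ← ht, ← hg]
  simp

theorem exists_forall_one_tmul_residueField_eq_smul {ι : Type*} {M N : ι → Type*}
    [∀ i, AddCommGroup (M i)] [∀ i, Module R (M i)] [∀ i, Module.Finite R (M i)]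
    [∀ i, Module.Projective R (M i)] [∀ i, AddCommGroup (N i)] [∀ i, Module R (N i)]
    (ψ : ∀ i, M i →ₗ[R] p.ResidueField ⊗[R] N i) {S : Finset ι} (hS : ∀ i ∉ S, ψ i = 0) :
    ∃ g : ∀ i, M i →ₗ[R] N i, ∃ t ∉ p, ∀ i x, 1 ⊗ₜ g i x = t • ψ i x := by
  choose g t ht hg using fun i => exists_one_tmul_residueField_eq_smul p (ψ i)
  have h (i) : ∃ g : M i →ₗ[R] N i, ∀ x, 1 ⊗ₜ g x = (∏ j ∈ S, t j) • ψ i x := by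
    by_cases hi : i ∈ S
    · obtain ⟨c, hc⟩ := Finset.dvd_prod_of_mem t hi
      exact ⟨c • g i, fun x => by simp [hg, hc, mul_comm, mul_smul]⟩
    · exact ⟨0, fun x => by simp [hS i hi]⟩
  choose g' hg' using h
  refine ⟨g', _, fun h => ?_, hg'⟩
  obtain ⟨i, -, hi⟩ := Ideal.IsPrime.prod_mem_iff.1 h
  exact ht i hi

theorem exists_functional_of_not_exact_baseChange_residueField {M₁ M₂ M₃ : Type*}
    [AddCommGroup M₁] [Module R M₁] [AddCommGroup M₂] [Module R M₂] [Module.Finite R M₂]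
    [Module.Projective R M₂] [AddCommGroup M₃] [Module R M₃] [Module.Flat R M₃]
    {f : M₁ →ₗ[R] M₂} {g : M₂ →ₗ[R] M₃} (hgf : g ∘ₗ f = 0)
    (h : ¬ Function.Exact (f.baseChange p.ResidueField) (g.baseChange p.ResidueField)) :
    ∃ (x : M₂) (φ : M₂ →ₗ[R] R), g x ∈ p • (⊤ : Submodule R M₃) ∧ (∀ y, φ (f y) ∈ p) ∧
      φ x ∉ p := by
  obtain ⟨v, hgv, hv⟩ : ∃ v, g.baseChange p.ResidueField v = 0 ∧
      v ∉ (f.baseChange p.ResidueField).range := by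
    contrapose! h
    refine LinearMap.exact_of_comp_of_mem_range (by
      rw [← LinearMap.baseChange_comp, hgf, LinearMap.baseChange_zero]) h
  obtain ⟨ℓ, hℓv, hℓ⟩ := Submodule.exists_le_ker_of_notMem hv
  obtain ⟨x, s, hs, hx⟩ := exists_one_tmul_residueField_eq_smul p (LinearMap.toSpanSingleton R _ v)
  obtain ⟨φ, t, ht, hφ⟩ := exists_one_tmul_residueField_eq_smul p
    ((TensorProduct.rid R p.ResidueField).symm.toLinearMap ∘ₗ ℓ.restrictScalars R ∘ₗ
      TensorProduct.mk R p.ResidueField M₂ 1)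
  have hφ' (y) : algebraMap R p.ResidueField (φ y) = t • ℓ (1 ⊗ₜ y) := by
    simpa [Algebra.algebraMap_eq_smul_one] using
      congrArg (TensorProduct.rid R p.ResidueField) (hφ y)
  have hx' : 1 ⊗ₜ x 1 = s • v := by simpa using hx 1
  refine ⟨x 1, φ, (one_tmul_residueField_eq_zero_iff p _).1 ?_, fun y => ?_, ?_⟩
  · rw [← LinearMap.baseChange_tmul, hx', LinearMap.map_smul_of_tower, hgv, smul_zero]
  · rw [← p.algebraMap_residueField_eq_zero, hφ', ← LinearMap.baseChange_tmul]
    rw [show ℓ _ = 0 from hℓ ⟨_, rfl⟩, smul_zero]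
  · rw [← p.algebraMap_residueField_eq_zero, hφ', hx', LinearMap.map_smul_of_tower]
    simp [Algebra.smul_def, hs, ht, hℓv]

theorem exists_contraction_modulo {K : CochainComplex (ModuleCat.{u} R) ℤ}
    (hK : boundedComplexes (finiteProjective R) K)
    (h : ∀ i j l, i + 1 = j → j + 1 = l → Function.Exact
      ((K.d i j).hom.baseChange p.ResidueField) ((K.d j l).hom.baseChange p.ResidueField)) :
    ∃ g : ∀ i j, K.X i →ₗ[R] K.X j, ∃ t ∉ p, ∀ i j l, i + 1 = j → j + 1 = l → ∀ x,
      (K.d i j).hom (g j i x) + g l j ((K.d j l).hom x) - t • x ∈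
        p • (⊤ : Submodule R (K.X j)) := by
  obtain ⟨hK, a, b, hab⟩ := hK
  have := fun i => (hK i).1
  have := fun i => (hK i).2
  have hsub (i) (hi : i ∉ Finset.Icc a b) : Subsingleton (K.X i) :=
    ModuleCat.subsingleton_of_isZero (hab i (by simpa using hi))
  obtain ⟨s, hs⟩ := exists_contraction_of_forall_exact
    (fun i j => (K.d i j).hom.baseChange p.ResidueField) h
  obtain ⟨g, t, ht, hg⟩ := exists_forall_one_tmul_residueField_eq_smul p
    (M := fun ij : ℤ × ℤ => K.X ij.1) (N := fun ij => K.X ij.2)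
    (fun ij => (s ij.1 ij.2).restrictScalars R ∘ₗ TensorProduct.mk R p.ResidueField _ 1)
    (S := Finset.Icc a b ×ˢ Finset.Icc a b) (by
      intro ij hij
      rw [Finset.mem_product, not_and_or] at hij
      obtain hi | hj := hij
      · have := hsub _ hi
        exact Subsingleton.elim _ _
      · have := hsub _ hj
        exact Subsingleton.elim _ _)
  refine ⟨fun i j => g (i, j), t, ht, fun i j l hij hjl x => ?_⟩
  rw [← one_tmul_residueField_eq_zero_iff, tmul_sub, tmul_add, hg, tmul_smul,
    ← LinearMap.baseChange_tmul, hg, sub_eq_zero]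
  simpa [smul_add] using congrArg (t • ·) (hs i j l hij hjl (1 ⊗ₜ x))

end ResidueField

section EndAlgebra

variable (R : Type*) [CommRing R]

/-- A linear functor, as an algebra homomorphism on endomorphism rings; it carries polynomial
identities between endomorphisms along the functor. -/
def mapEndAlgHom {C D : Type*} [Category* C] [Preadditive C] [Linear R C] [Category* D]
    [Preadditive D] [Linear R D] (F : C ⥤ D) [F.Additive] [F.Linear R] (X : C) :
    End X →ₐ[R] End (F.obj X) :=
  .ofLinearMap (F.mapLinearMap R) (F.map_id X) fun f g => F.map_comp g f

variable {R : Type u} [CommRing R]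

/-- The action of the endomorphisms of a complex of modules on its term of degree `i`, where the
Cayley-Hamilton theorem applies. -/
def endToModuleEnd (K : CochainComplex (ModuleCat.{u} R) ℤ) (i : ℤ) :
    End K →ₐ[R] Module.End R (K.X i) :=
  .ofLinearMap { toFun f := (f.f i).hom, map_add' _ _ := rfl, map_smul' _ _ := rfl } rfl
    fun _ _ => rfl

end EndAlgebra

section CayleyHamilton

open Polynomial

variable {R : Type u} [CommRing R]

theorem exists_map_eq_X_pow_and_aeval_eq_zero {M : Type*} [AddCommGroup M] [Module R M]
    [Module.Finite R M] {p : Ideal R} {f : Module.End R M} (hf : f.range ≤ p • ⊤) :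
    ∃ (P : R[X]) (n : ℕ), P.map (Ideal.Quotient.mk p) = X ^ n ∧ aeval f P = 0 := by
  obtain ⟨P, hP, -, hPp, hPf⟩ :=
    LinearMap.exists_monic_and_natDegree_eq_and_coeff_mem_pow_and_aeval_eq_zero R f p hf
  refine ⟨P, P.natDegree, ?_, hPf⟩
  ext m
  rw [coeff_map, coeff_X_pow]
  split_ifs with hm
  · rw [hm, hP.coeff_natDegree, map_one]
  · obtain hm | hm := lt_or_gt_of_ne hm
    · exact Ideal.Quotient.eq_zero_iff_mem.2 (Ideal.pow_le_self (by lia) (hPp m))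
    · rw [coeff_eq_zero_of_natDegree_lt hm, map_zero]

theorem boundedComplexes.exists_map_eq_X_pow_and_aeval_eq_zero
    {K : CochainComplex (ModuleCat.{u} R) ℤ} (hK : boundedComplexes (finiteProjective R) K)
    {p : Ideal R} {f : End K} (hf : ∀ i, (f.f i).hom.range ≤ p • ⊤) :
    ∃ (P : R[X]) (n : ℕ), P.map (Ideal.Quotient.mk p) = X ^ n ∧ aeval f P = 0 := by
  obtain ⟨hK, a, b, hab⟩ := hK
  have := fun i => (hK i).1
  choose P n hP hPf using fun i => _root_.exists_map_eq_X_pow_and_aeval_eq_zero (hf i)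
  refine ⟨∏ i ∈ Finset.Icc a b, P i, ∑ i ∈ Finset.Icc a b, n i, ?_, ?_⟩
  · rw [Polynomial.map_prod, Finset.prod_congr rfl fun i _ => hP i, Finset.prod_pow_eq_pow_sum]
  · refine HomologicalComplex.hom_ext _ _ fun i => ?_
    by_cases hi : i ∈ Finset.Icc a b
    · obtain ⟨Q, hQ⟩ := Finset.dvd_prod_of_mem P hi
      rw [hQ]
      refine ModuleCat.hom_ext ((aeval_algHom_apply (endToModuleEnd K i) f (P i * Q)).symm.trans ?_)
      rw [map_mul]
      exact (congrArg (· * _) (hPf i)).trans (zero_mul _)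
    · exact (hab i (by simpa using hi)).eq_of_src _ _

variable [HasDerivedCategory.{w'} (ModuleCat.{u} R)]

/-- A null-homotopic endomorphism congruent to `t` modulo `p` becomes zero in the derived category,
so that the Cayley-Hamilton theorem gives a polynomial, congruent to a power of `X` modulo `p`,
which vanishes at `-t`. -/
theorem exists_smul_id_eq_zero_of_contraction {K : CochainComplex (ModuleCat.{u} R) ℤ}
    (hK : boundedComplexes (finiteProjective R) K) {p : Ideal R} [p.IsPrime] {t : R} (ht : t ∉ p)
    (g : ∀ i j, K.X i →ₗ[R] K.X j) (hg : ∀ i j l, i + 1 = j → j + 1 = l → ∀ x,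
      (K.d i j).hom (g j i x) + g l j ((K.d j l).hom x) - t • x ∈ p • (⊤ : Submodule R (K.X j))) :
    ∃ r ∉ p, r • 𝟙 (DerivedCategory.Q.obj K) = 0 := by
  let h (i j : ℤ) (_ : (ComplexShape.up ℤ).Rel j i) : K.X i ⟶ K.X j := ModuleCat.ofHom (g i j)
  let f : End K := Homotopy.nullHomotopicMap' h - t • 𝟙 K
  have hf (i) : (f.f i).hom.range ≤ p • ⊤ := by
    rintro _ ⟨x, rfl⟩
    have hfi : f.f i = K.d i (i + 1) ≫ h (i + 1) i (by simp) + h i (i - 1) (by simp) ≫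
        K.d (i - 1) i - t • 𝟙 (K.X i) :=
      congrArg (· - _) (Homotopy.nullHomotopicMap'_f (by simp) (by simp) h)
    rw [hfi]
    simpa [h, add_comm] using hg (i - 1) i (i + 1) (by simp) rfl x
  have hQf : DerivedCategory.Q.map f = algebraMap R (End (DerivedCategory.Q.obj K)) (-t) := by
    have hQh := DerivedCategory.Q_map_eq_of_homotopy _ (Homotopy.nullHomotopy' h)
    rw [Functor.map_zero] at hQh
    rw [Functor.map_sub, hQh, Functor.map_smul, CategoryTheory.Functor.map_id, zero_sub, ← neg_smul]
    rfl
  obtain ⟨P, n, hP, hPf⟩ := hK.exists_map_eq_X_pow_and_aeval_eq_zero hf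
  refine ⟨P.eval (-t), fun hPt => ?_, ?_⟩
  · have := congrArg (Polynomial.eval (Ideal.Quotient.mk p (-t))) hP
    rw [Polynomial.eval_map, eval₂_hom, eval_pow, eval_X, Ideal.Quotient.eq_zero_iff_mem.2 hPt,
      ← map_pow,
      eq_comm, Ideal.Quotient.eq_zero_iff_mem] at this
    exact ht (by simpa using Ideal.IsPrime.mem_of_pow_mem ‹_› _ this)
  · change algebraMap R (End (DerivedCategory.Q.obj K)) (P.eval (-t)) = 0
    rw [← aeval_algebraMap_apply_eq_algebraMap_eval, ← hQf]
    refine (aeval_algHom_apply (mapEndAlgHom R DerivedCategory.Q K) f P).trans ?_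
    rw [hPf, map_zero]

end CayleyHamilton

section FGIdeals

variable {R : Type*} [CommRing R]

theorem exists_fg_le_and_le_sup {I J K : Ideal R} (hJ : J.FG) (h : J ≤ I ⊔ K) :
    ∃ I' ≤ I, I'.FG ∧ J ≤ I' ⊔ K := by
  obtain ⟨s, rfl⟩ := hJ
  have h_decomp (x : s) : ∃ y ∈ I, ∃ z ∈ K, y + z = (x : R) :=
    Submodule.mem_sup.1 (h (Ideal.subset_span x.2))
  choose y hy z hz hyz using h_decomp
  refine ⟨Ideal.span (Set.range y), Ideal.span_le.2 (Set.range_subset_iff.2 hy),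
    Submodule.fg_span (Set.finite_range y), Ideal.span_le.2 fun x hx => ?_⟩
  exact Submodule.mem_sup.2 ⟨_, Ideal.subset_span ⟨⟨x, hx⟩, rfl⟩, _, hz _, hyz _⟩

theorem exists_fg_le_and_mem_smul {M : Type*} [AddCommGroup M] [Module R M] {I : Ideal R}
    {N : Submodule R M} {x : M} (hx : x ∈ I • N) : ∃ I' ≤ I, I'.FG ∧ x ∈ I' • N := by
  induction hx using Submodule.smul_induction_on' with
  | smul a ha n hn =>
    exact ⟨Ideal.span {a}, (Ideal.span_singleton_le_iff_mem I).2 ha,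
      Submodule.fg_span_singleton a,
      Submodule.smul_mem_smul (Ideal.mem_span_singleton_self a) hn⟩
  | add x _ y _ hx hy =>
    obtain ⟨I₁, h₁, hI₁, hx⟩ := hx
    obtain ⟨I₂, h₂, hI₂, hy⟩ := hy
    exact ⟨I₁ ⊔ I₂, sup_le h₁ h₂, Submodule.FG.sup hI₁ hI₂, add_mem
      (Submodule.smul_mono_left le_sup_left hx) (Submodule.smul_mono_left le_sup_right hy)⟩

end FGIdeals

section Oka

variable {R : Type u} [CommRing R] [HasDerivedCategory.{w'} (ModuleCat.{u} R)]

/-- The ideal `J` contains a finitely generated ideal `I` with `R/I` in `L`. For localizing `L` this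
is an Oka family in the ideal `J`. -/
def HasFGQuotientMem (L : Set (DerivedCategory (ModuleCat.{u} R))) (J : Ideal R) : Prop :=
  ∃ I ≤ J, I.FG ∧ smod R (ModuleCat.of R (R ⧸ I)) ∈ L

variable {L : Set (DerivedCategory (ModuleCat.{u} R))}

theorem HasFGQuotientMem.of_forall_factors (hL : IsLocalizingSub.{u} L) {I J : Ideal R} {a : R}
    (h : HasFGQuotientMem L (I ⊔ Ideal.span {a})) (hJI : J ≤ I) (hJ : J.FG)
    (h_factors : ∀ M : ModuleCat.{u} R, J ≤ Module.annihilator R M →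
      ∃ Y ∈ L, ∃ (f : smod R M ⟶ Y) (g : Y ⟶ smod R M), f ≫ g = a • 𝟙 (smod R M)) :
    HasFGQuotientMem L I := by
  obtain ⟨I₁, h₁, hI₁, hI₁L⟩ := h
  obtain ⟨I₂, h₂, hI₂, h₁₂⟩ := exists_fg_le_and_le_sup hI₁ h₁
  have h_quot : smod R (ModuleCat.of R (R ⧸ (I₂ ⊔ J) ⊔ Ideal.span {a})) ∈ L :=
    smod_mem_of_le_annihilator hL hI₁L (h₁₂.trans
      ((sup_le_sup_right le_sup_left _).trans Ideal.annihilator_quotient.ge))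
  obtain ⟨Y, hY, f, g, hfg⟩ := h_factors (ModuleCat.of R (R ⧸ I₂ ⊔ J))
    (le_sup_right.trans Ideal.annihilator_quotient.ge)
  refine ⟨I₂ ⊔ J, sup_le h₂ hJI, Submodule.FG.sup hI₂ hJ,
    hL.mem_of_trW_of_factors (f := f) (g := g) ?_ hY⟩
  rw [hfg]
  exact hL.trW_smul_id_smod h_quot Ideal.annihilator_quotient.ge

theorem exists_factors_smul_id_smod (hL : IsLocalizingSub.{u} L) {J : Ideal R} {a : R}
    (hJ : smod R (ModuleCat.of R (R ⧸ J)) ∈ L) {M : ModuleCat.{u} R}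
    (hM : Ideal.span {a} * J ≤ Module.annihilator R M) :
    ∃ Y ∈ L, ∃ (f : smod R M ⟶ Y) (g : Y ⟶ smod R M), f ≫ g = a • 𝟙 (smod R M) := by
  refine ⟨smod R (Abelian.image (a • 𝟙 M)), smod_mem_of_le_annihilator hL hJ fun r hr => ?_,
    (DerivedCategory.singleFunctor _ 0).map (Abelian.factorThruImage _),
    (DerivedCategory.singleFunctor _ 0).map (Abelian.image.ι _), ?_⟩
  · rw [mem_annihilator_iff_smul_id_eq_zero, ← cancel_epi (Abelian.factorThruImage (a • 𝟙 M)),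
      ← cancel_mono (Abelian.image.ι (a • 𝟙 M)), Linear.comp_smul, Category.comp_id,
      Linear.smul_comp, Abelian.image.fac, comp_zero, zero_comp, smul_smul, mul_comm,
      ← mem_annihilator_iff_smul_id_eq_zero]
    exact hM (Ideal.mul_mem_mul (Ideal.mem_span_singleton_self a) hr)
  · refine ((DerivedCategory.singleFunctor _ 0).map_comp _ _).symm.trans ?_
    rw [Abelian.image.fac, singleFunctor_map_smul_id]

theorem IsLocalizingSub.isOka_hasFGQuotientMem (hL : IsLocalizingSub.{u} L) :
    Ideal.IsOka (HasFGQuotientMem L) where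
  top := by
    have := ModuleCat.isZero_of_subsingleton (ModuleCat.of R (R ⧸ (⊤ : Ideal R)))
    exact ⟨⊤, le_rfl, Ideal.fg_top R, hL.mem_of_isZero
      ((DerivedCategory.singleFunctor _ 0).map_isZero this)⟩
  oka {I a} h := by
    rintro ⟨J, hJI, hJ, hJL⟩
    refine h.of_forall_factors hL (J := Ideal.span {a} * J) ?_
      (Submodule.FG.mul (Submodule.fg_span_singleton a) hJ) fun M hM =>
      exists_factors_smul_id_smod hL hJL hM
    exact Ideal.span_singleton_mul_le_iff.2 fun r hr =>
      mul_comm a r ▸ Ideal.mem_colon_span_singleton.1 (hJI hr)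

theorem exists_le_maximal_not_hasFGQuotientMem {I : Ideal R} (hI : ¬ HasFGQuotientMem L I) :
    ∃ p, I ≤ p ∧ Maximal (¬ HasFGQuotientMem L ·) p := by
  refine zorn_le_nonempty₀ {J | ¬ HasFGQuotientMem L J} (fun S hS hS_chain J hJ => ?_) I hI
  refine ⟨sSup S, ?_, fun _ => le_sSup⟩
  rintro ⟨J', hJ', hJ'_fg, hJ'_mem⟩
  obtain ⟨K, hK, hJ'K⟩ := (Submodule.fg_iff_compact J').1 hJ'_fg S _ ⟨J, hJ⟩ hS_chain.directedOn
    (isLUB_sSup S) hJ'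
  exact hS hK ⟨J', hJ'K, hJ'_fg, hJ'_mem⟩

end Oka

section Support

open MonoidalCategory

variable {R : Type u} [CommRing R]

theorem tmul_eq_zero_of_mem_annihilator_smul {M N : Type*} [AddCommGroup M] [Module R M]
    [AddCommGroup N] [Module R N] {x : M}
    (hx : x ∈ Module.annihilator R N • (⊤ : Submodule R M)) (n : N) :
    x ⊗ₜ[R] n = 0 := by
  induction hx using Submodule.smul_induction_on' with
  | smul r hr y _ =>
    rw [TensorProduct.smul_tmul, Module.mem_annihilator.1 hr, TensorProduct.tmul_zero]
  | add y _ z _ hy hz => rw [TensorProduct.add_tmul, hy, hz, add_zero]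

theorem exists_single_factors_smul_id {K : CochainComplex (ModuleCat.{u} R) ℤ} {i j l : ℤ}
    (hij : i + 1 = j)
    (hjl : j + 1 = l) {M : ModuleCat.{u} R} {x : K.X j} {φ : K.X j →ₗ[R] R}
    (hx : (K.d j l).hom x ∈ Module.annihilator R M • (⊤ : Submodule R (K.X l)))
    (hφ : ∀ y, φ ((K.d i j).hom y) ∈ Module.annihilator R M) :
    ∃ (f : (HomologicalComplex.single _ (.up ℤ) j).obj M ⟶ (tensorComplex K).obj M)
      (g : (tensorComplex K).obj M ⟶ (HomologicalComplex.single _ (.up ℤ) j).obj M),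
      f ≫ g = φ x • 𝟙 _ := by
  let f : M ⟶ ((tensorComplex K).obj M).X j := ModuleCat.ofHom (TensorProduct.mk R (K.X j) M x)
  let g : ((tensorComplex K).obj M).X j ⟶ M :=
    ModuleCat.ofHom (TensorProduct.lift (LinearMap.lsmul R M ∘ₗ φ))
  have hf (l') (hl' : (ComplexShape.up ℤ).Rel j l') : f ≫ ((tensorComplex K).obj M).d j l' = 0 := by
    obtain rfl : l = l' := hjl.symm.trans hl'
    ext m
    exact tmul_eq_zero_of_mem_annihilator_smul hx m
  have hg (i') (hi' : (ComplexShape.up ℤ).Rel i' j) : ((tensorComplex K).obj M).d i' j ≫ g = 0 := by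
    obtain rfl : i = i' := add_right_cancel (hij.trans hi'.symm)
    refine ModuleCat.hom_ext (TensorProduct.ext' fun y m => ?_)
    exact Module.mem_annihilator.1 (hφ y) m
  have hfg : f ≫ g = φ x • 𝟙 M := by
    ext m
    exact TensorProduct.lift.tmul (f' := LinearMap.lsmul R M ∘ₗ φ) x m
  refine ⟨HomologicalComplex.mkHomFromSingle f hf, HomologicalComplex.mkHomToSingle g hg,
    HomologicalComplex.from_single_hom_ext ?_⟩
  rw [HomologicalComplex.comp_f, HomologicalComplex.mkHomFromSingle_f,
    HomologicalComplex.mkHomToSingle_f, Category.assoc, reassoc_of% hfg, Linear.smul_comp,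
    Linear.comp_smul, Category.id_comp, Iso.hom_inv_id]
  rfl

variable [HasDerivedCategory.{w'} (ModuleCat.{u} R)] {L : Set (DerivedCategory (ModuleCat.{u} R))}

theorem exists_smod_factors_of_single_factors (hL : IsLocalizingSub.{u} L) {j : ℤ} {a : R}
    {M : ModuleCat.{u} R} {Y : CochainComplex (ModuleCat.{u} R) ℤ}
    (hY : DerivedCategory.Q.obj Y ∈ L)
    (f : (HomologicalComplex.single _ (.up ℤ) j).obj M ⟶ Y)
    (g : Y ⟶ (HomologicalComplex.single _ (.up ℤ) j).obj M) (hfg : f ≫ g = a • 𝟙 _) :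
    ∃ Y ∈ L, ∃ (f : smod R M ⟶ Y) (g : Y ⟶ smod R M), f ≫ g = a • 𝟙 (smod R M) := by
  let e : (DerivedCategory.Q.obj ((HomologicalComplex.single _ (.up ℤ) j).obj M))⟦j⟧ ≅ smod R M :=
    ((DerivedCategory.singleFunctors _).shiftIso j 0 j (add_zero j)).app M
  refine ⟨_, hL.shift_mem j hY, e.inv ≫ (DerivedCategory.Q.map f)⟦j⟧',
    (DerivedCategory.Q.map g)⟦j⟧' ≫ e.hom, ?_⟩
  rw [Category.assoc, ← Functor.map_comp_assoc, ← Functor.map_comp, hfg, Functor.map_smul,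
    Functor.map_smul, CategoryTheory.Functor.map_id, CategoryTheory.Functor.map_id,
    Linear.smul_comp, Linear.comp_smul, Category.id_comp, e.inv_hom_id]

theorem hasFGQuotientMem_of_not_exact {K : CochainComplex (ModuleCat.{u} R) ℤ}
    (hK : boundedComplexes (finiteProjective R) K) {p : Ideal R} [p.IsPrime] {i j l : ℤ}
    (hij : i + 1 = j) (hjl : j + 1 = l) (h : ¬ Function.Exact
      ((K.d i j).hom.baseChange p.ResidueField) ((K.d j l).hom.baseChange p.ResidueField))
    (hp : ∀ a ∉ p, HasFGQuotientMem (Loc.{u} {DerivedCategory.Q.obj K}) (p ⊔ Ideal.span {a})) :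
    HasFGQuotientMem (Loc.{u} {DerivedCategory.Q.obj K}) p := by
  have := fun i => (hK.1 i).1
  have := fun i => (hK.1 i).2
  have h_comp : (K.d j l).hom ∘ₗ (K.d i j).hom = 0 :=
    (ModuleCat.hom_comp _ _).symm.trans (congrArg ModuleCat.Hom.hom (K.d_comp_d i j l))
  obtain ⟨x, φ, hx, hφ, hφx⟩ := exists_functional_of_not_exact_baseChange_residueField p h_comp h
  obtain ⟨q, hqp, hq, hxq⟩ := exists_fg_le_and_mem_smul hx
  let J : Ideal R := (⊤ : Submodule R (K.X i)).map (φ ∘ₗ (K.d i j).hom)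
  have hJ : J.FG := Module.Finite.fg_top.map _
  refine (hp _ hφx).of_forall_factors (isLocalizingSub_loc _) (J := q ⊔ J)
    (sup_le hqp (Submodule.map_le_iff_le_comap.2 fun y _ => hφ y)) (Submodule.FG.sup hq hJ)
    fun M hM => ?_
  obtain ⟨f, g, hfg⟩ := exists_single_factors_smul_id hij hjl
    (Submodule.smul_mono_left (le_sup_left.trans hM) hxq)
    fun y => le_sup_right.trans hM (Submodule.mem_map_of_mem (f := φ ∘ₗ (K.d i j).hom) trivial)
  exact exists_smod_factors_of_single_factors (isLocalizingSub_loc _)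
    (Q_tensorComplex_obj_mem_loc hK M) f g hfg

theorem hasFGQuotientMem_annihilator {K : CochainComplex (ModuleCat.{u} R) ℤ}
    (hK : boundedComplexes (finiteProjective R) K) :
    HasFGQuotientMem (Loc.{u} {DerivedCategory.Q.obj K})
      (RingHom.ker (algebraMap R (End (DerivedCategory.Q.obj K)))) := by
  by_contra h
  obtain ⟨p, h_le, hp⟩ := exists_le_maximal_not_hasFGQuotientMem h
  have := (isLocalizingSub_loc _).isOka_hasFGQuotientMem.isPrime_of_maximal_not hp
  refine hp.prop ?_
  by_cases h_exact : ∀ i j l, i + 1 = j → j + 1 = l → Function.Exact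
      ((K.d i j).hom.baseChange p.ResidueField) ((K.d j l).hom.baseChange p.ResidueField)
  · obtain ⟨g, t, ht, hg⟩ := exists_contraction_modulo p hK h_exact
    obtain ⟨r, hr, hrK⟩ := exists_smul_id_eq_zero_of_contraction hK ht g hg
    exact absurd (h_le hrK) hr
  · push Not at h_exact
    obtain ⟨i, j, l, hij, hjl, h_not⟩ := h_exact
    refine hasFGQuotientMem_of_not_exact hK hij hjl h_not fun a ha => ?_
    by_contra h_sup
    exact ha (hp.le_of_ge h_sup le_sup_left (Ideal.mem_sup_right (Ideal.mem_span_singleton_self a)))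

variable (R) in
theorem exists_locQuot_eq_of_isCompactObj {C : DerivedCategory (ModuleCat.{u} R)}
    (hC : IsCompactObj.{u} C) : ∃ I : Ideal R, I.FG ∧ Loc.{u} {C} = locQuot R I := by
  obtain ⟨K, hK, hKC⟩ := exists_boundedComplexes_loc_eq_of_isCompactObj R hC
  obtain ⟨I, hI_le, hI, hI_mem⟩ := hasFGQuotientMem_annihilator hK
  refine ⟨I, hI, hKC ▸ subset_antisymm ?_ ?_⟩
  · exact (loc_singleton_subset_iff (isLocalizingSub_loc _)).2
      (mem_locQuot_of_forall_exists_pow hI fun f hf => ⟨1, (pow_one f).symm ▸ hI_le hf⟩)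
  · exact (loc_singleton_subset_iff (isLocalizingSub_loc _)).2 hI_mem

end Support

theorem exists_orderIso_of_surjective {ι α β : Type*} [PartialOrder α] [PartialOrder β]
    {f : ι → α} {g : ι → β} (hf : Function.Surjective f) (hg : Function.Surjective g)
    (h : ∀ i j, f i ≤ f j ↔ g i ≤ g j) : ∃ e : α ≃o β, ∀ i, e (f i) = g i := by
  have apply_surjInv (i : ι) : g (Function.surjInv hf (f i)) = g i := by
    have := Function.surjInv_eq hf (f i)
    exact ((h _ _).1 this.le).antisymm ((h _ _).1 this.ge)
  let φ : α ↪o β := OrderEmbedding.ofMapLEIff (g ∘ Function.surjInv hf) fun a b => by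
    rw [Function.comp_apply, Function.comp_apply, ← h, Function.surjInv_eq hf,
      Function.surjInv_eq hf]
  exact ⟨RelIso.ofSurjective φ fun b => (hg b).elim fun i hi =>
    ⟨f i, (apply_surjInv i).trans hi⟩, apply_surjInv⟩

section Statement2

variable (R : Type u) [CommRing R] [HasDerivedCategory.{w'} (ModuleCat.{u} R)]

/-- Theorem: `√I ↦ Loc(R/I)` (for `I` finitely generated) is a well-defined,
inclusion-reversing bijection from the Zariski lattice of `R` (radicals of
finitely generated ideals, ordered by inclusion) onto the poset of localizing
subcategories of `D(R)` generated by a single compact object; in particular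
there is an order isomorphism between the Zariski lattice and the opposite of
that poset. -/
theorem zariskiLattice_orderIso_singleCompactLoc :
    -- inclusion-reversing comparison (whence well-definedness and injectivity):
    (∀ I J : Ideal R, I.FG → J.FG →
      (I.radical ≤ J.radical ↔ locQuot R J ⊆ locQuot R I)) ∧
    -- every Loc(R/I) with I f.g. is generated by a single compact object:
    (∀ I : Ideal R, I.FG →
      ∃ C : DerivedCategory (ModuleCat.{u} R), IsCompactObj.{u} C ∧
        locQuot R I = Loc.{u} {C}) ∧
    -- surjectivity: every localizing subcategory generated by a single compact
    -- object is of the form Loc(R/I) with I f.g.: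
    (∀ C : DerivedCategory (ModuleCat.{u} R), IsCompactObj.{u} C →
      ∃ I : Ideal R, I.FG ∧ Loc.{u} {C} = locQuot R I) ∧
    -- the induced order isomorphism with the opposite poset:
    ∃ e : {K : Ideal R // ∃ I : Ideal R, I.FG ∧ K = I.radical} ≃o
        ({L : Set (DerivedCategory (ModuleCat.{u} R)) //
          ∃ C : DerivedCategory (ModuleCat.{u} R), IsCompactObj.{u} C ∧
            L = Loc.{u} {C}})ᵒᵈ,
      ∀ (I : Ideal R) (hI : I.FG),
        (OrderDual.ofDual (e ⟨I.radical, I, hI, rfl⟩)).1 = locQuot R I := by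
  have comparison (I J : Ideal R) (hI : I.FG) :
      I.radical ≤ J.radical ↔ locQuot R J ⊆ locQuot R I :=
    radical_le_radical_iff_locQuot_subset R hI
  refine ⟨fun I J hI _ => comparison I J hI, fun I hI => exists_isCompactObj_locQuot_eq hI,
    fun C hC => exists_locQuot_eq_of_isCompactObj R hC, ?_⟩
  let Index := {I : Ideal R // I.FG}
  let radical (I : Index) : {K : Ideal R // ∃ I : Ideal R, I.FG ∧ K = I.radical} :=
    ⟨I.1.radical, I.1, I.2, rfl⟩
  let loc (I : Index) : ({L : Set (DerivedCategory (ModuleCat.{u} R)) //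
      ∃ C : DerivedCategory (ModuleCat.{u} R), IsCompactObj.{u} C ∧ L = Loc.{u} {C}})ᵒᵈ :=
    OrderDual.toDual ⟨locQuot R I.1, exists_isCompactObj_locQuot_eq I.2⟩
  have radical_surjective : Function.Surjective radical := by
    rintro ⟨_, I, hI, rfl⟩
    exact ⟨⟨I, hI⟩, rfl⟩
  have loc_surjective : Function.Surjective loc := by
    rintro ⟨_, C, hC, rfl⟩
    obtain ⟨I, hI, h⟩ := exists_locQuot_eq_of_isCompactObj R hC
    exact ⟨⟨I, hI⟩, congrArg OrderDual.toDual (Subtype.ext h.symm)⟩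
  obtain ⟨e, he⟩ := exists_orderIso_of_surjective radical_surjective loc_surjective
    fun I J => comparison I.1 J.1 I.2
  exact ⟨e, fun I hI => congrArg (fun L => (OrderDual.ofDual L).1) (he ⟨I, hI⟩)⟩

end Statement2
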